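/- For every integer n > 1, (p(n-1)/p(n)) · (1 + 1/n) > p(n)/p(n+1). -/

import Mathlib

open Real

/-- The partition function, as a real number. -/
noncomputable def p (n : ℕ) : ℝ := (Fintype.card (Nat.Partition n) : ℝ)

section

open Finset intervalIntegral MeasureTheory
open scoped Nat ArithmeticFunction.sigma

/-! ### The divisor sum recurrence for the partition function -/

namespace Nat.Partition

/-- The total number of occurrences of the part `a` in all partitions of `n`. -/
def occurrences (a n : ℕ) : ℕ := ∑ l : n.Partition, l.parts.count a

theorem occurrences_of_lt {a n : ℕ} (h : n < a) : occurrences a n = 0 :=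
  Finset.sum_eq_zero fun _ _ => Multiset.count_eq_zero.2 fun ha =>
    (le_of_mem_parts ha).not_gt h

theorem occurrences_eq_add {a n : ℕ} (ha : 1 ≤ a) (han : a ≤ n) :
    occurrences a n = Fintype.card (n - a).Partition + occurrences a (n - a) := by
  have h : occurrences a n = ∑ l : {l : n.Partition // a ∈ l.parts}, l.1.parts.count a := by
    rw [← Finset.sum_subtype (Finset.univ.filter fun l : n.Partition => a ∈ l.parts) (by simp)
      (fun l : n.Partition => l.parts.count a), Finset.sum_filter_of_ne]
    · rfl
    · exact fun l _ hl => Multiset.count_ne_zero.1 hl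
  rw [h, ← (partitionWithPartEquiv ha han).symm.sum_comp]
  simp [occurrences, Finset.sum_add_distrib, add_comm]

theorem occurrences_eq_sum {a : ℕ} (ha : 1 ≤ a) (n : ℕ) :
    occurrences a n = ∑ k ∈ Icc 1 n with a ∣ k, Fintype.card (n - k).Partition := by
  induction n using Nat.strong_induction_on with
  | _ n ih =>
    rcases lt_or_ge n a with h | h
    · rw [occurrences_of_lt h, Finset.sum_eq_zero]
      intro k hk
      simp only [mem_filter, mem_Icc] at hk
      have := Nat.le_of_dvd (by lia) hk.2
      lia
    · rw [occurrences_eq_add ha h, ih (n - a) (by lia)]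
      have : (Icc 1 n).filter (a ∣ ·) =
          insert a (((Icc 1 (n - a)).filter (a ∣ ·)).map (addRightEmbedding a)) := by
        ext k
        simp only [mem_filter, mem_Icc, mem_insert, mem_map, addRightEmbedding_apply]
        constructor
        · rintro ⟨hk, hd⟩
          have := Nat.le_of_dvd (by lia) hd
          rcases eq_or_ne k a with h | h
          · exact Or.inl h
          · exact Or.inr ⟨k - a, ⟨by lia, Nat.dvd_sub hd dvd_rfl⟩, by lia⟩
        · rintro (rfl | ⟨j, ⟨hj, hd⟩, rfl⟩)
          · exact ⟨by lia, dvd_rfl⟩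
          · exact ⟨by lia, hd.add dvd_rfl⟩
      rw [this, Finset.sum_insert (by simp), Finset.sum_map]
      simp only [addRightEmbedding_apply]
      congr 1
      exact Finset.sum_congr rfl fun k _ => by rw [Nat.sub_sub, add_comm]

theorem sum_mul_count {n : ℕ} (l : n.Partition) :
    ∑ a ∈ Icc 1 n, a * l.parts.count a = n := by
  conv_rhs => rw [← l.parts_sum, Finset.sum_multiset_count]
  simp only [smul_eq_mul, mul_comm]
  refine (Finset.sum_subset (fun a ha => ?_) fun a _ ha => ?_).symm
  · rw [Multiset.mem_toFinset] at ha
    exact mem_Icc.2 ⟨l.parts_pos ha, le_of_mem_parts ha⟩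
  · rw [Multiset.mem_toFinset] at ha
    simp [Multiset.count_eq_zero.2 ha]

theorem mul_card_eq_sum_sigma (n : ℕ) :
    n * Fintype.card n.Partition = ∑ k ∈ Icc 1 n, σ 1 k * Fintype.card (n - k).Partition := by
  calc n * Fintype.card n.Partition
      = ∑ l : n.Partition, ∑ a ∈ Icc 1 n, a * l.parts.count a := by
        simp [sum_mul_count, mul_comm]
    _ = ∑ a ∈ Icc 1 n, a * occurrences a n := by
        rw [Finset.sum_comm]
        simp [occurrences, Finset.mul_sum]
    _ = ∑ a ∈ Icc 1 n, ∑ k ∈ Icc 1 n with a ∣ k, a * Fintype.card (n - k).Partition := by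
        refine Finset.sum_congr rfl fun a ha => ?_
        rw [occurrences_eq_sum (mem_Icc.1 ha).1, Finset.mul_sum]
    _ = ∑ k ∈ Icc 1 n, ∑ a ∈ k.divisors, a * Fintype.card (n - k).Partition := by
        refine Finset.sum_comm' fun a k => ?_
        simp only [mem_filter, mem_Icc, Nat.mem_divisors]
        constructor
        · rintro ⟨ha, hk, hd⟩
          exact ⟨⟨hd, by lia⟩, hk⟩
        · rintro ⟨⟨hd, h0⟩, hk⟩
          have := Nat.le_of_dvd (by lia) hd
          have := Nat.pos_of_dvd_of_pos hd (by lia)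
          exact ⟨by lia, hk, hd⟩
    _ = _ := by simp [ArithmeticFunction.sigma_one_apply, Finset.sum_mul]

end Nat.Partition

/-! ### Evaluating the pentagonal number recurrence at an integer -/

section Pentagonal

open PowerSeries

theorem powerSeries_mk_card_partition_mul_pentagonalSeries :
    (PowerSeries.mk fun n => (Fintype.card n.Partition : ℤ)) * pentagonalSeries ℤ = 1 := by
  let : TopologicalSpace ℤ := ⊥
  have : DiscreteTopology ℤ := ⟨rfl⟩
  open scoped PowerSeries.WithPiTopology in
  have h₁ := Nat.Partition.hasProd_powerSeriesMk_card_restricted ℤ fun _ => True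
  have h₂ := h₁.mul (WithPiTopology.hasProd_one_sub_X_pow ℤ)
  have h₃ : ∀ i : ℕ, (if True then ∑' j : ℕ, (X : ℤ⟦X⟧) ^ ((i + 1) * j) else 1) *
      (1 - X ^ (i + 1)) = 1 := by
    intro i
    rw [if_pos trivial]
    simp_rw [pow_mul]
    exact WithPiTopology.tsum_pow_mul_one_sub_of_constantCoeff_eq_zero (by simp)
  simp only [h₃] at h₂
  have h₄ := h₂.unique hasProd_one
  simpa [Nat.Partition.restricted] using h₄

theorem coeff_pentagonalSeries_eq_sum {m K : ℕ} (h : m < K * (3 * K + 1) / 2) :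
    coeff m (pentagonalSeries ℤ) = ∑ k ∈ range K, (-1) ^ k *
      ((if m = k * (3 * k + 1) / 2 then 1 else 0) -
        if m = (k + 1) * (3 * k + 2) / 2 then 1 else 0) := by
  let : TopologicalSpace ℤ := ⊥
  have : DiscreteTopology ℤ := ⟨rfl⟩
  open scoped PowerSeries.WithPiTopology in
  have h₁ := (WithPiTopology.hasSum_pow_pentagonal_sub_pentagonalSeries ℤ).map (coeff m)
    (WithPiTopology.continuous_coeff ℤ m)
  have hneg : ∀ k : ℕ, pentagonal (-k) = k * (3 * k + 1) / 2 := fun k => by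
    rw [pentagonal_neg]; norm_cast
  have hpos : ∀ k : ℕ, pentagonal (k + 1) = (k + 1) * (3 * k + 2) / 2 := fun k => by
    rw [pentagonal_def, show (3 : ℤ) * (k + 1) - 1 = 3 * k + 2 by ring]; norm_cast
  have hterm : ∀ k : ℕ, (⇑(coeff (R := ℤ) m) ∘ fun k : ℕ => (-1) ^ k *
      ((X : ℤ⟦X⟧) ^ pentagonal (-k) - X ^ pentagonal (k + 1))) k = (-1) ^ k *
      ((if m = k * (3 * k + 1) / 2 then 1 else 0) -
        if m = (k + 1) * (3 * k + 2) / 2 then 1 else 0) := fun k => by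
    have : ((-1) ^ k : ℤ⟦X⟧) = C ((-1) ^ k) := by simp
    simp only [Function.comp, this, coeff_C_mul, map_sub, coeff_X_pow, hneg, hpos]
  rw [funext hterm] at h₁
  refine h₁.unique (hasSum_sum_of_ne_finset_zero fun k hk => ?_)
  rw [Finset.mem_range, not_lt] at hk
  have h₂ : K * (3 * K + 1) ≤ k * (3 * k + 1) := by gcongr
  have h₃ : k * (3 * k + 1) ≤ (k + 1) * (3 * k + 2) := by gcongr <;> lia
  rw [if_neg (by lia), if_neg (by lia)]
  simp

theorem pow_dvd_sum_card_partition_mul_sub_one (q : ℤ) {N K : ℕ} (h : N ≤ K * (3 * K + 1) / 2) :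
    q ^ N ∣ (∑ n ∈ range N, (Fintype.card n.Partition : ℤ) * q ^ n) *
      (∑ k ∈ range K, (-1) ^ k * (q ^ (k * (3 * k + 1) / 2) - q ^ ((k + 1) * (3 * k + 2) / 2))) -
        1 := by
  let P : Polynomial ℤ := ∑ n ∈ range N,
    Polynomial.C (Fintype.card n.Partition : ℤ) * Polynomial.X ^ n
  let E : Polynomial ℤ := ∑ k ∈ range K, Polynomial.C ((-1) ^ k) *
    (Polynomial.X ^ (k * (3 * k + 1) / 2) - Polynomial.X ^ ((k + 1) * (3 * k + 2) / 2))
  have hP : ∀ i < N, P.coeff i = Fintype.card i.Partition := fun i hi => by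
    simp [P, Polynomial.finsetSum_coeff, Polynomial.coeff_X_pow, hi]
  have hE : ∀ i < N, E.coeff i = coeff i (pentagonalSeries ℤ) := fun i hi => by
    rw [coeff_pentagonalSeries_eq_sum (hi.trans_le h)]
    simp only [E, Polynomial.finsetSum_coeff, Polynomial.coeff_C_mul, Polynomial.coeff_sub,
      Polynomial.coeff_X_pow]
  have hdvd : Polynomial.X ^ N ∣ P * E - 1 := by
    refine Polynomial.X_pow_dvd_iff.2 fun d hd => ?_
    have := congrArg (coeff d) powerSeries_mk_card_partition_mul_pentagonalSeries
    rw [PowerSeries.coeff_mul, PowerSeries.coeff_one] at this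
    rw [Polynomial.coeff_sub, Polynomial.coeff_mul, Polynomial.coeff_one, sub_eq_zero]
    rw [← this]
    refine Finset.sum_congr rfl fun i hi => ?_
    have := mem_antidiagonal.1 hi
    rw [hP _ (by lia), hE _ (by lia), coeff_mk]
  have := map_dvd (Polynomial.evalRingHom q) hdvd
  simpa [P, E, Polynomial.eval_finsetSum] using this

end Pentagonal

/-! ### Computing small values of the partition function -/

namespace PartitionTable

/-- The base in which the values of the partition function are packed. -/
def base : ℕ := 2 ^ 256

/-- The positive terms of the truncated pentagonal series at `q`. -/
def posPart (q : ℕ) : ℕ → ℕ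
  | 0 => 0
  | k + 1 => posPart q k +
      if k % 2 = 0 then q ^ (k * (3 * k + 1) / 2) else q ^ ((k + 1) * (3 * k + 2) / 2)

/-- The negative terms of the truncated pentagonal series at `q`. -/
def negPart (q : ℕ) : ℕ → ℕ
  | 0 => 0
  | k + 1 => negPart q k +
      if k % 2 = 0 then q ^ ((k + 1) * (3 * k + 2) / 2) else q ^ (k * (3 * k + 1) / 2)

/-- Newton iteration for the inverse of `u - v` modulo powers of `base`. -/
def newton (u v : ℕ) : ℕ → ℕ
  | 0 => 1
  | i + 1 =>
    newton u v i * (2 + (base ^ 2 ^ (i + 1) - newton u v i * u % base ^ 2 ^ (i + 1)) +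
      newton u v i * v % base ^ 2 ^ (i + 1)) % base ^ 2 ^ (i + 1)

/-- A natural number whose lowest digits in base `base` are the values of the partition function. -/
def packed : ℕ := newton (posPart base 53) (negPart base 53) 13

/-- Checks the inequality `n * p n ^ 2 < (n + 1) * p (n - 1) * p (n + 1)` for `2 ^ d` consecutive
values starting from `n`, where the digits of `a` are `p (n - 1)`, `p n`, … . -/
def check : ℕ → ℕ → ℕ → Bool
  | 0, n, a => Nat.blt (n * (a / base % base) ^ 2)
      ((n + 1) * (a % base) * (a / base ^ 2 % base))
  | d + 1, n, a => check d n a && check d (n + 2 ^ d) (a / base ^ 2 ^ d)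

set_option maxRecDepth 100000 in
set_option exponentiation.threshold 1000000 in
theorem packed_mul_posPart_mod : packed * posPart base 53 % base ^ 4100 =
    (packed * negPart base 53 + 1) % base ^ 4100 := by
  decide +kernel

set_option maxRecDepth 100000 in
set_option exponentiation.threshold 1000000 in
theorem check_packed : check 12 2 (packed / base) = true := by
  decide +kernel

theorem sum_mul_pow_lt {q : ℕ} {d : ℕ → ℕ} {N : ℕ} (hd : ∀ n < N, d n < q) :
    ∑ n ∈ range N, d n * q ^ n < q ^ N := by
  induction N with
  | zero => simp
  | succ N ih =>
    rw [sum_range_succ]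
    have h₁ := ih fun n hn => hd n (by lia)
    have h₂ := Nat.mul_le_mul_right (q ^ N) (hd N (by lia))
    rw [pow_succ']
    rw [Nat.succ_mul] at h₂
    lia

theorem digit_sum_mul_pow {q : ℕ} {d : ℕ → ℕ} {N : ℕ} (hd : ∀ n < N, d n < q) {n : ℕ}
    (hn : n < N) : (∑ i ∈ range N, d i * q ^ i) / q ^ n % q = d n := by
  have hq : 0 < q := (Nat.zero_le _).trans_lt (hd n hn)
  obtain ⟨M, rfl⟩ : ∃ M, N = n + 1 + M := ⟨N - (n + 1), by lia⟩
  have hsplit : ∑ i ∈ range (n + 1 + M), d i * q ^ i =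
      ∑ i ∈ range n, d i * q ^ i + q ^ n * (d n + q * ∑ i ∈ range M, d (n + 1 + i) * q ^ i) := by
    rw [sum_range_add, sum_range_succ, mul_add, mul_sum, mul_sum, add_assoc, mul_comm (d n)]
    congr 2
    exact sum_congr rfl fun i _ => by ring
  rw [hsplit, Nat.add_mul_div_left _ _ (by positivity),
    Nat.div_eq_of_lt (sum_mul_pow_lt fun i hi => hd i (by lia)), zero_add,
    Nat.add_mul_mod_self_left, Nat.mod_eq_of_lt (hd n hn)]

theorem digit_mod_pow {q N n : ℕ} (hn : n < N) (a : ℕ) :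
    a % q ^ N / q ^ n % q = a / q ^ n % q := by
  obtain ⟨M, rfl⟩ : ∃ M, N = n + (M + 1) := ⟨N - (n + 1), by lia⟩
  rw [pow_add, Nat.mod_mul_right_div_self, Nat.mod_mod_of_dvd _ (dvd_pow_self q (by lia))]

theorem mod_pow_eq_of_inverse {m a u v : ℕ} {A : ℕ} (h : a * u % m = (a * v + 1) % m)
    (hA : (m : ℤ) ∣ A * (u - v) - 1) : A % m = a % m := by
  have h₁ : (m : ℤ) ∣ a * (u - v) - 1 := by
    have h₂ : ((a * v + 1 : ℕ) : ℤ) ≡ (a * u : ℕ) [ZMOD m] := Int.natCast_modEq_iff.2 h.symm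
    have h₃ : (a : ℤ) * (u - v) - 1 = (a * u : ℕ) - (a * v + 1 : ℕ) := by push_cast; ring
    exact h₃ ▸ h₂.dvd
  refine (Nat.modEq_iff_dvd.2 ?_ : A ≡ a [MOD m])
  have h₂ : (a : ℤ) - A = A * (a * (u - v) - 1) - a * (A * (u - v) - 1) := by ring
  exact h₂ ▸ (h₁.mul_left (A : ℤ)).sub (hA.mul_left (a : ℤ))

theorem posPart_sub_negPart (q K : ℕ) : (posPart q K : ℤ) - negPart q K =
    ∑ k ∈ range K, (-1) ^ k *
      ((q : ℤ) ^ (k * (3 * k + 1) / 2) - (q : ℤ) ^ ((k + 1) * (3 * k + 2) / 2)) := by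
  induction K with
  | zero => simp [posPart, negPart]
  | succ K ih =>
    rw [sum_range_succ, ← ih, posPart, negPart]
    rcases Nat.even_or_odd K with hK | hK
    · rw [if_pos (Nat.even_iff.1 hK), if_pos (Nat.even_iff.1 hK), hK.neg_one_pow]
      push_cast
      ring
    · have : ¬ K % 2 = 0 := by have := Nat.odd_iff.1 hK; lia
      rw [if_neg this, if_neg this, hK.neg_one_pow]
      push_cast
      ring

theorem digit_packed (h : ∀ n < 4100, Fintype.card n.Partition < base) {n : ℕ} (hn : n < 4100) :
    packed / base ^ n % base = Fintype.card n.Partition := by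
  have hA := pow_dvd_sum_card_partition_mul_sub_one base (N := 4100) (K := 53) (by norm_num)
  rw [← posPart_sub_negPart] at hA
  have hmod := mod_pow_eq_of_inverse (A := ∑ n ∈ range 4100, Fintype.card n.Partition * base ^ n)
    packed_mul_posPart_mod (by push_cast; exact hA)
  rw [← digit_mod_pow hn, ← hmod, digit_mod_pow hn, digit_sum_mul_pow h hn]

theorem lt_of_check {d n a : ℕ} (h : check d n a = true) {j : ℕ} (hj : j < 2 ^ d) :
    (n + j) * (a / base ^ (j + 1) % base) ^ 2 <
      (n + j + 1) * (a / base ^ j % base) * (a / base ^ (j + 2) % base) := by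
  induction d generalizing n a j with
  | zero =>
    obtain rfl : j = 0 := by simpa using hj
    simpa [check, Nat.blt_eq] using h
  | succ d ih =>
    rw [check, Bool.and_eq_true] at h
    rcases lt_or_ge j (2 ^ d) with hj' | hj'
    · exact ih h.1 hj'
    · obtain ⟨i, rfl⟩ := Nat.exists_eq_add_of_le hj'
      have := ih h.2 (j := i) (by rw [pow_succ] at hj; lia)
      simp only [Nat.div_div_eq_div_mul, ← pow_add] at this
      rw [show n + (2 ^ d + i) = n + 2 ^ d + i by ring]
      exact this

theorem mul_card_sq_lt (h : ∀ n < 4100, Fintype.card n.Partition < base) {n : ℕ} (hn : 1 < n)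
    (hn' : n < 4098) : n * Fintype.card n.Partition ^ 2 <
      (n + 1) * Fintype.card (n - 1).Partition * Fintype.card (n + 1).Partition := by
  obtain ⟨j, rfl⟩ := Nat.exists_eq_add_of_le (show 2 ≤ n from hn)
  have := lt_of_check check_packed (j := j) (by lia)
  simp only [Nat.div_div_eq_div_mul, ← pow_succ'] at this
  rw [digit_packed h (by lia), digit_packed h (by lia), digit_packed h (by lia)] at this
  have e₁ : j + 1 + 1 = 2 + j := by lia
  have e₂ : j + 1 = 2 + j - 1 := by lia
  rwa [e₁, e₂] at this

end PartitionTable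

/-! ### The generating function of the partition function -/

namespace PartitionAsymptotics

theorem p_pos (n : ℕ) : 0 < p n := by
  rw [p]
  exact_mod_cast Fintype.card_pos

theorem p_zero : p 0 = 1 := by simp [p]

theorem sigma_le_sq (k : ℕ) : (σ 1 k : ℝ) ≤ (k : ℝ) ^ 2 := by
  exact_mod_cast ArithmeticFunction.sigma_le_pow_succ 1 k

theorem summable_pow_mul_sigma (j : ℕ) {x : ℝ} (hx : 0 ≤ x) (hx1 : x < 1) :
    Summable fun k : ℕ => (k : ℝ) ^ j * σ 1 k * x ^ k := by
  have h := summable_pow_mul_geometric_of_norm_lt_one (j + 2)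
    (show ‖x‖ < 1 by rwa [Real.norm_of_nonneg hx])
  refine h.of_nonneg_of_le (fun k => by positivity) fun k => ?_
  rw [pow_add]
  have := sigma_le_sq k
  gcongr

theorem summable_sigma {x : ℝ} (hx : 0 ≤ x) (hx1 : x < 1) :
    Summable fun k : ℕ => (σ 1 k : ℝ) * x ^ k := by
  simpa using summable_pow_mul_sigma 0 hx hx1

theorem summable_sigma_div {x : ℝ} (hx : 0 ≤ x) (hx1 : x < 1) :
    Summable fun k : ℕ => (σ 1 k : ℝ) / k * x ^ k := by
  refine (summable_sigma hx hx1).of_nonneg_of_le (fun k => by positivity) fun k => ?_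
  gcongr
  rcases Nat.eq_zero_or_pos k with rfl | hk
  · simp
  · exact div_le_self (by positivity) (by exact_mod_cast hk)

theorem mul_p_eq_sum (n : ℕ) : n * p n = ∑ k ∈ Icc 1 n, (σ 1 k : ℝ) * p (n - k) := by
  simp only [p]
  exact_mod_cast Nat.Partition.mul_card_eq_sum_sigma n

theorem add_one_mul_p_eq_sum (n : ℕ) :
    (n + 1) * p (n + 1) = ∑ ij ∈ antidiagonal n, (σ 1 (ij.1 + 1) : ℝ) * p ij.2 := by
  have h := mul_p_eq_sum (n + 1)
  push_cast at h
  have h₁ := Finset.sum_Ico_add' (fun k => (σ 1 k : ℝ) * p (n + 1 - k)) 0 (n + 1) 1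
  rw [h, Finset.Nat.sum_antidiagonal_eq_sum_range_succ_mk, Finset.range_eq_Ico]
  exact h₁.symm.trans (Finset.sum_congr rfl fun k _ => by simp)

theorem exists_p_mul_pow_le {r : ℝ} (hr : 0 < r) (hr1 : r < 1) : ∃ C, ∀ n, p n * r ^ n ≤ C := by
  obtain ⟨N, hN⟩ := exists_nat_gt (∑' k : ℕ, (σ 1 k : ℝ) * r ^ k)
  have hs := summable_sigma hr.le hr1
  have hpos : ∀ n, 0 ≤ p n * r ^ n := fun n => mul_nonneg (p_pos n).le (by positivity)
  refine ⟨∑ i ∈ range (N + 1), p i * r ^ i, fun n => ?_⟩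
  set C := ∑ i ∈ range (N + 1), p i * r ^ i
  have hC : 0 ≤ C := Finset.sum_nonneg fun i _ => hpos i
  induction n using Nat.strong_induction_on with
  | _ n ih =>
    rcases lt_or_ge n (N + 1) with hn | hn
    · exact Finset.single_le_sum (f := fun i => p i * r ^ i) (fun i _ => hpos i)
        (Finset.mem_range.2 hn)
    · have hn0 : (0 : ℝ) < n := by exact_mod_cast (by lia : 0 < n)
      have h : n * (p n * r ^ n) ≤ n * C := by
        calc n * (p n * r ^ n)
            = ∑ k ∈ Icc 1 n, (σ 1 k * r ^ k) * (p (n - k) * r ^ (n - k)) := by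
              rw [← mul_assoc, mul_p_eq_sum, Finset.sum_mul]
              refine Finset.sum_congr rfl fun k hk => ?_
              conv_lhs => rw [← Nat.add_sub_of_le (mem_Icc.1 hk).2, pow_add]
              rw [Nat.add_sub_of_le (mem_Icc.1 hk).2]
              ring
          _ ≤ ∑ k ∈ Icc 1 n, (σ 1 k * r ^ k) * C := by
              refine Finset.sum_le_sum fun k hk => ?_
              have := mem_Icc.1 hk
              exact mul_le_mul_of_nonneg_left (ih _ (by lia)) (by positivity)
          _ = (∑ k ∈ Icc 1 n, (σ 1 k : ℝ) * r ^ k) * C := by rw [Finset.sum_mul]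
          _ ≤ n * C := by
              gcongr
              refine (hs.sum_le_tsum _ fun k _ => by positivity).trans (hN.le.trans ?_)
              exact_mod_cast (by lia : N ≤ n)
      exact le_of_mul_le_mul_left h hn0

theorem summable_pow_mul_p (j : ℕ) {x : ℝ} (hx : 0 ≤ x) (hx1 : x < 1) :
    Summable fun n : ℕ => (n : ℝ) ^ j * p n * x ^ n := by
  obtain ⟨r, hxr, hr1⟩ := exists_between hx1
  have hr : 0 < r := hx.trans_lt hxr
  obtain ⟨C, hC⟩ := exists_p_mul_pow_le hr hr1
  have h := (summable_pow_mul_geometric_of_norm_lt_one j (r := x / r)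
    (by rw [Real.norm_of_nonneg (by positivity)]; exact (div_lt_one hr).2 hxr)).mul_left C
  refine h.of_nonneg_of_le (fun n => by have := p_pos n; positivity) fun n => ?_
  calc (n : ℝ) ^ j * p n * x ^ n = (p n * r ^ n) * ((n : ℝ) ^ j * (x / r) ^ n) := by
        rw [div_pow]; field_simp
    _ ≤ _ := by gcongr; exact hC n

theorem summable_p {x : ℝ} (hx : 0 ≤ x) (hx1 : x < 1) : Summable fun n : ℕ => p n * x ^ n := by
  simpa using summable_pow_mul_p 0 hx hx1

/-- A power series with coefficients `c n` may be differentiated term by term on the unit disc. -/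
theorem hasDerivAt_tsum_mul_pow {c : ℕ → ℝ} (hc : ∀ n, 0 ≤ c n)
    (hs : ∀ x : ℝ, 0 ≤ x → x < 1 → Summable fun n : ℕ => (n : ℝ) * c n * x ^ n) {z : ℂ} (hz : ‖z‖ < 1) :
    HasDerivAt (fun w : ℂ => ∑' n, (c n : ℂ) * w ^ n)
      (∑' n : ℕ, ((n + 1 : ℕ) : ℂ) * c (n + 1) * z ^ n) z := by
  obtain ⟨r, hzr, hr1⟩ := exists_between hz
  have hr : 0 < r := (norm_nonneg z).trans_lt hzr
  have hu : Summable fun n : ℕ => (n : ℝ) * c n * r ^ (n - 1) := by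
    refine ((hs r hr.le hr1).mul_right r⁻¹).congr fun n => ?_
    rcases n with _ | n
    · simp
    · rw [Nat.add_sub_cancel, pow_succ]; field_simp
  have hbd : ∀ (n : ℕ) (y : ℂ), y ∈ Metric.ball (0 : ℂ) r →
      ‖(c n : ℂ) * (n * y ^ (n - 1))‖ ≤ (n : ℝ) * c n * r ^ (n - 1) := by
    intro n y hy
    have hy' : ‖y‖ ≤ r := (mem_ball_zero_iff.1 hy).le
    rw [norm_mul, norm_mul, norm_pow, Complex.norm_real, Real.norm_of_nonneg (hc n),
      Complex.norm_natCast]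
    have := hc n
    calc c n * (n * ‖y‖ ^ (n - 1)) = n * c n * ‖y‖ ^ (n - 1) := by ring
      _ ≤ _ := by gcongr
  have h := hasDerivAt_tsum_of_isPreconnected (g := fun n (w : ℂ) => (c n : ℂ) * w ^ n)
    (g' := fun n w => (c n : ℂ) * (n * w ^ (n - 1))) hu Metric.isOpen_ball
    (convex_ball (0 : ℂ) r).isPreconnected (fun n y _ => (hasDerivAt_pow n y).const_mul _) hbd
    (Metric.mem_ball_self hr)
    (summable_of_ne_finset_zero (s := {0}) fun n hn => by
      simp [Finset.mem_singleton.not.1 hn])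
    (mem_ball_zero_iff.2 hzr)
  refine h.congr_deriv ?_
  rw [(Summable.of_norm_bounded hu fun n => hbd n z (mem_ball_zero_iff.2 hzr)).tsum_eq_zero_add]
  simp only [Nat.cast_zero, zero_mul, mul_zero, zero_add, Nat.add_sub_cancel]
  exact tsum_congr fun n => by ring

theorem norm_ofReal_mul_pow {c : ℝ} (hc : 0 ≤ c) (z : ℂ) (n : ℕ) :
    ‖(c : ℂ) * z ^ n‖ = c * ‖z‖ ^ n := by
  rw [norm_mul, norm_pow, Complex.norm_real, Real.norm_of_nonneg hc]

theorem tsum_p_mul_pow_eq_exp {z : ℂ} (hz : ‖z‖ < 1) :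
    ∑' n, (p n : ℂ) * z ^ n = Complex.exp (∑' k : ℕ, ((σ 1 k / k : ℝ) : ℂ) * z ^ k) := by
  set P : ℂ → ℂ := fun w => ∑' n, (p n : ℂ) * w ^ n with hP
  set H : ℂ → ℂ := fun w => ∑' k : ℕ, ((σ 1 k / k : ℝ) : ℂ) * w ^ k with hH
  set G : ℂ → ℂ := fun w => ∑' k : ℕ, ((σ 1 (k + 1) : ℝ) : ℂ) * w ^ k with hG
  have hGs : ∀ x : ℝ, 0 ≤ x → x < 1 → Summable fun k : ℕ => (σ 1 (k + 1) : ℝ) * x ^ k := by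
    intro x hx hx1
    rcases hx.eq_or_lt with rfl | hx
    · exact summable_of_ne_finset_zero (s := {0}) fun n hn => by
        simp [Finset.mem_singleton.not.1 hn]
    · refine (((summable_nat_add_iff 1).2 (summable_sigma hx.le hx1)).mul_right x⁻¹).congr
        fun k => ?_
      rw [pow_succ]; field_simp
  have hPd : ∀ w : ℂ, ‖w‖ < 1 → HasDerivAt P (G w * P w) w := by
    intro w hw
    have h := hasDerivAt_tsum_mul_pow (c := p) (fun n => (p_pos n).le)
      (fun x hx hx1 => by simpa using summable_pow_mul_p 1 hx hx1) hw
    refine h.congr_deriv ?_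
    have h₁ : Summable fun k => ‖((σ 1 (k + 1) : ℝ) : ℂ) * w ^ k‖ := by
      refine (hGs _ (norm_nonneg w) hw).congr fun k => ?_
      rw [norm_ofReal_mul_pow (by positivity)]
    have h₂ : Summable fun k => ‖(p k : ℂ) * w ^ k‖ := by
      refine (summable_p (norm_nonneg w) hw).congr fun k => ?_
      rw [norm_ofReal_mul_pow (p_pos k).le]
    rw [hG, hP]
    simp only
    rw [tsum_mul_tsum_eq_tsum_sum_antidiagonal_of_summable_norm h₁ h₂]
    refine tsum_congr fun n => ?_
    have h₃ := congrArg (fun t : ℝ => (t : ℂ)) (add_one_mul_p_eq_sum n)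
    push_cast at h₃ ⊢
    rw [h₃, Finset.sum_mul]
    refine Finset.sum_congr rfl fun ij hij => ?_
    rw [← mem_antidiagonal.1 hij, pow_add]
    ring
  have hHd : ∀ w : ℂ, ‖w‖ < 1 → HasDerivAt H (G w) w := by
    intro w hw
    have h := hasDerivAt_tsum_mul_pow (c := fun k => (σ 1 k : ℝ) / k) (fun k => by positivity)
      (fun x hx hx1 => by
        refine (summable_sigma hx hx1).congr fun k => ?_
        rcases k with _ | k
        · simp
        · field_simp) hw
    refine h.congr_deriv ?_
    refine tsum_congr fun k => ?_
    have : ((k : ℂ) + 1) ≠ 0 := by exact_mod_cast Nat.succ_ne_zero k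
    push_cast
    field_simp
  have hQ : ∀ w ∈ Metric.ball (0 : ℂ) 1, HasDerivAt (fun w => P w * Complex.exp (-H w)) 0 w := by
    intro w hw
    have hw' := mem_ball_zero_iff.1 hw
    refine ((hPd w hw').mul (hHd w hw').neg.cexp).congr_deriv ?_
    ring
  have hconst := (convex_ball (0 : ℂ) 1).is_const_of_fderivWithin_eq_zero (𝕜 := ℂ)
    (f := fun w => P w * Complex.exp (-H w))
    (fun w hw => (hQ w hw).differentiableAt.differentiableWithinAt)
    (fun w hw => by
      rw [fderivWithin_of_isOpen Metric.isOpen_ball hw]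
      simpa using (hQ w hw).hasFDerivAt.fderiv)
    (mem_ball_zero_iff.2 hz) (Metric.mem_ball_self one_pos)
  have hP0 : P 0 = 1 := by
    rw [hP]; simp only
    rw [tsum_eq_single 0 fun n hn => by simp [hn]]
    simp [p_zero]
  have hH0 : H 0 = 0 := by
    rw [hH]; simp only
    rw [tsum_eq_single 0 fun n hn => by simp [hn]]
    simp
  simp only [hP0, hH0, neg_zero, Complex.exp_zero, mul_one] at hconst
  rw [Complex.exp_neg, mul_inv_eq_one₀ (Complex.exp_ne_zero _)] at hconst
  exact hconst

/-- The logarithm of the ratio between the generating function at `x` and its absolute value at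
`x * exp (θ * I)`. -/
noncomputable def decay (x θ : ℝ) : ℝ := ∑' k : ℕ, (σ 1 k : ℝ) / k * x ^ k * (1 - cos (k * θ))

/-- The argument of the generating function at `x * exp (θ * I)`. -/
noncomputable def phase (x θ : ℝ) : ℝ := ∑' k : ℕ, (σ 1 k : ℝ) / k * x ^ k * sin (k * θ)

/-- The logarithm of the generating function at `x`. -/
noncomputable def logGen (x : ℝ) : ℝ := ∑' k : ℕ, (σ 1 k : ℝ) / k * x ^ k

theorem summable_mul_of_abs_le {c g : ℕ → ℝ} {B : ℝ} (hc : Summable c) (hc0 : ∀ k, 0 ≤ c k)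
    (hg : ∀ k, |g k| ≤ B) : Summable fun k => c k * g k := by
  refine Summable.of_norm_bounded (hc.mul_right B) fun k => ?_
  rw [norm_mul, Real.norm_of_nonneg (hc0 k)]
  exact mul_le_mul_of_nonneg_left (hg k) (hc0 k)

theorem abs_one_sub_cos_le (t : ℝ) : |1 - cos t| ≤ 2 :=
  abs_le.2 ⟨by linarith [cos_le_one t], by linarith [neg_one_le_cos t]⟩

variable {x : ℝ}

theorem summable_decay (hx : 0 ≤ x) (hx1 : x < 1) (θ : ℝ) :
    Summable fun k : ℕ => (σ 1 k : ℝ) / k * x ^ k * (1 - cos (k * θ)) :=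
  summable_mul_of_abs_le (summable_sigma_div hx hx1) (fun k => by positivity)
    fun k => abs_one_sub_cos_le _

theorem summable_phase (hx : 0 ≤ x) (hx1 : x < 1) (θ : ℝ) :
    Summable fun k : ℕ => (σ 1 k : ℝ) / k * x ^ k * sin (k * θ) :=
  summable_mul_of_abs_le (summable_sigma_div hx hx1) (fun k => by positivity)
    fun k => abs_sin_le_one _

theorem continuous_decay (hx : 0 ≤ x) (hx1 : x < 1) : Continuous (decay x) := by
  refine continuous_tsum (fun k => by fun_prop) ((summable_sigma_div hx hx1).mul_right 2)
    fun k θ => ?_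
  rw [norm_mul, Real.norm_of_nonneg (by positivity : (0 : ℝ) ≤ (σ 1 k : ℝ) / k * x ^ k)]
  exact mul_le_mul_of_nonneg_left (abs_one_sub_cos_le _) (by positivity)

theorem continuous_phase (hx : 0 ≤ x) (hx1 : x < 1) : Continuous (phase x) := by
  refine continuous_tsum (fun k => by fun_prop) (summable_sigma_div hx hx1) fun k θ => ?_
  rw [norm_mul, Real.norm_of_nonneg (by positivity : (0 : ℝ) ≤ (σ 1 k : ℝ) / k * x ^ k)]
  exact mul_le_of_le_one_right (by positivity) (abs_sin_le_one _)

theorem ofReal_mul_exp_pow (c x θ : ℝ) (k : ℕ) :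
    (c : ℂ) * (x * Complex.exp (θ * Complex.I)) ^ k =
      ((c * x ^ k * cos (k * θ) : ℝ) : ℂ) + ((c * x ^ k * sin (k * θ) : ℝ) : ℂ) * Complex.I := by
  rw [mul_pow, ← Complex.exp_nat_mul, show (k : ℂ) * (θ * Complex.I) =
    ((k * θ : ℝ) : ℂ) * Complex.I by push_cast; ring, Complex.exp_mul_I, ← Complex.ofReal_cos,
    ← Complex.ofReal_sin]
  push_cast
  ring

theorem norm_ofReal_mul_exp (hx : 0 ≤ x) (θ : ℝ) : ‖(x : ℂ) * Complex.exp (θ * Complex.I)‖ = x := by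
  rw [norm_mul, Complex.norm_exp_ofReal_mul_I, mul_one, Complex.norm_real, Real.norm_of_nonneg hx]

theorem tsum_sigma_div_mul_pow_exp (hx : 0 ≤ x) (hx1 : x < 1) (θ : ℝ) :
    ∑' k : ℕ, ((σ 1 k / k : ℝ) : ℂ) * (x * Complex.exp (θ * Complex.I)) ^ k =
      ((logGen x - decay x θ : ℝ) : ℂ) + (phase x θ : ℝ) * Complex.I := by
  have h₁ : HasSum (fun k : ℕ => (σ 1 k : ℝ) / k * x ^ k * cos (k * θ)) (logGen x - decay x θ) := by
    refine ((summable_sigma_div hx hx1).hasSum.sub (summable_decay hx hx1 θ).hasSum).congr_fun ?_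
    intro k; ring
  have h₂ := (summable_phase hx hx1 θ).hasSum
  simp_rw [ofReal_mul_exp_pow]
  exact ((Complex.hasSum_ofReal.2 h₁).add ((Complex.hasSum_ofReal.2 h₂).mul_right _)).tsum_eq

theorem hasSum_p_mul_cos (hx : 0 ≤ x) (hx1 : x < 1) (n : ℕ) (θ : ℝ) :
    HasSum (fun m : ℕ => p m * x ^ m * cos ((m - n) * θ))
      (exp (logGen x - decay x θ) * cos (phase x θ - n * θ)) := by
  have hz : ‖(x : ℂ) * Complex.exp (θ * Complex.I)‖ < 1 := by rwa [norm_ofReal_mul_exp hx]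
  have hs : Summable fun m : ℕ => (p m : ℂ) * (x * Complex.exp (θ * Complex.I)) ^ m := by
    refine Summable.of_norm ((summable_p hx hx1).congr fun m => ?_)
    rw [norm_ofReal_mul_pow (p_pos m).le, norm_ofReal_mul_exp hx]
  have h := hs.hasSum
  rw [tsum_p_mul_pow_eq_exp hz, tsum_sigma_div_mul_pow_exp hx hx1] at h
  have h₁ := Complex.hasSum_re (h.mul_right (Complex.exp ((-(n * θ) : ℝ) * Complex.I)))
  rw [← Complex.exp_add, add_assoc, ← add_mul, ← Complex.ofReal_add, Complex.exp_add,
    ← Complex.ofReal_exp, Complex.re_ofReal_mul, Complex.exp_ofReal_mul_I_re,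
    ← sub_eq_add_neg] at h₁
  refine h₁.congr_fun fun m => ?_
  rw [mul_pow, ← Complex.exp_nat_mul, mul_assoc, mul_assoc, mul_assoc, ← Complex.exp_add,
    show (m : ℂ) * (θ * Complex.I) + ((-(n * θ) : ℝ) : ℂ) * Complex.I =
    (((m - n) * θ : ℝ) : ℂ) * Complex.I by push_cast; ring, ← Complex.ofReal_pow,
    Complex.re_ofReal_mul, Complex.re_ofReal_mul, Complex.exp_ofReal_mul_I_re]

theorem integral_cos_int_mul (j : ℤ) :
    ∫ θ in (0 : ℝ)..π, cos (j * θ) = if j = 0 then π else 0 := by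
  split_ifs with hj
  · simp [hj]
  · have : (j : ℝ) ≠ 0 := by exact_mod_cast hj
    rw [intervalIntegral.integral_comp_mul_left (fun t => cos t) this]
    simp [Real.sin_int_mul_pi]

/-- The integral giving the `n`-th coefficient of the generating function on the circle of
radius `x`, normalised by the value of the generating function at `x`. -/
noncomputable def coeffIntegral (x : ℝ) (n : ℕ) : ℝ :=
  ∫ θ in (0 : ℝ)..π, exp (-decay x θ) * cos (phase x θ - n * θ)

theorem exp_logGen_mul_coeffIntegral (hx : 0 ≤ x) (hx1 : x < 1) (n : ℕ) :
    exp (logGen x) * coeffIntegral x n = π * (p n * x ^ n) := by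
  have h := intervalIntegral.hasSum_integral_of_dominated_convergence (μ := volume)
    (a := 0) (b := π) (F := fun (m : ℕ) (θ : ℝ) => p m * x ^ m * cos ((m - n) * θ))
    (f := fun θ => exp (logGen x - decay x θ) * cos (phase x θ - n * θ))
    (fun m _ => p m * x ^ m)
    (fun m => (by fun_prop : Continuous _).aestronglyMeasurable)
    (fun m => Filter.Eventually.of_forall fun θ _ => by
      have := p_pos m
      rw [norm_mul, Real.norm_of_nonneg (by positivity)]
      exact mul_le_of_le_one_right (by positivity) (abs_cos_le_one _))
    (Filter.Eventually.of_forall fun θ _ => summable_p hx hx1)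
    intervalIntegrable_const
    (Filter.Eventually.of_forall fun θ _ => hasSum_p_mul_cos hx hx1 n θ)
  have hval : ∀ m : ℕ, ∫ θ in (0 : ℝ)..π, p m * x ^ m * cos ((m - n) * θ) =
      if m = n then π * (p n * x ^ n) else 0 := by
    intro m
    have h₁ := integral_cos_int_mul (m - n)
    push_cast at h₁
    rw [intervalIntegral.integral_const_mul, h₁]
    rcases eq_or_ne m n with rfl | hmn
    · simp [mul_comm]
    · rw [if_neg (by lia), if_neg hmn, mul_zero]
  simp only [hval] at h
  rw [coeffIntegral, ← intervalIntegral.integral_const_mul, ← h.unique (hasSum_ite_eq n _)]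
  refine intervalIntegral.integral_congr fun θ _ => ?_
  rw [← mul_assoc, ← exp_add, ← sub_eq_add_neg]

/-! ### Bounds for moments of the divisor sum -/

theorem sum_one_div_sq_le (M : ℕ) : ∑ m ∈ Icc 1 M, 1 / (m : ℝ) ^ 2 ≤ 1.65 := by
  refine (hasSum_zeta_two.summable.sum_le_tsum _ fun m _ => by positivity).trans ?_
  rw [hasSum_zeta_two.tsum_eq]
  nlinarith [pi_lt_d4, pi_pos]

theorem sq_mul_pow_le_one_sub_pow_sq (hx : 0 ≤ x) (hx1 : x < 1) {m : ℕ} (hm : 1 ≤ m) :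
    (m : ℝ) ^ 2 * x ^ (m - 1) * (1 - x) ^ 2 ≤ (1 - x ^ m) ^ 2 := by
  have h₁ : 1 - x ^ m = (∑ i ∈ range m, x ^ i) * (1 - x) := by
    have := geom_sum_mul x m
    linarith
  have h₂ := Finset.sum_sq_le_sum_mul_sum_of_sq_le_mul (range m) (r := fun _ => √x ^ (m - 1))
    (f := fun i => x ^ i) (g := fun i => x ^ (m - 1 - i)) (fun i _ => by positivity)
    (fun i _ => by positivity) (fun i hi => by
      have : i + (m - 1 - i) = m - 1 := by have := Finset.mem_range.1 hi; lia
      rw [← pow_mul, mul_comm, pow_mul, Real.sq_sqrt hx, ← pow_add, this])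
  rw [Finset.sum_range_reflect (fun i => x ^ i) m, Finset.sum_const, card_range, nsmul_eq_mul,
    mul_pow, ← pow_mul, mul_comm (m - 1) 2, pow_mul, Real.sq_sqrt hx] at h₂
  rw [h₁, mul_pow, sq (∑ i ∈ range m, x ^ i)]
  gcongr

theorem mul_pow_le_one_sub_pow (hx : 0 ≤ x) (hx1 : x < 1) (m : ℕ) :
    (m : ℝ) * x ^ m * (1 - x) ≤ 1 - x ^ m := by
  have h₁ : 1 - x ^ m = (∑ i ∈ range m, x ^ i) * (1 - x) := by
    have := geom_sum_mul x m
    linarith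
  rw [h₁]
  have h₂ : ∑ i ∈ range m, x ^ m ≤ ∑ i ∈ range m, x ^ i :=
    Finset.sum_le_sum fun i hi => pow_le_pow_of_le_one hx hx1.le (Finset.mem_range.1 hi).le
  rw [Finset.sum_const, card_range, nsmul_eq_mul] at h₂
  have : 0 ≤ 1 - x := by linarith
  gcongr

theorem sum_divisorsAntidiagonal_le {g : ℕ → ℕ → ℝ} (hg : ∀ m d, 0 ≤ g m d) {B : ℕ → ℝ} {C : ℝ}
    (hB : ∀ m M, 1 ≤ m → ∑ d ∈ Icc 1 M, g m d ≤ B m) (hC : ∀ M, ∑ m ∈ Icc 1 M, B m ≤ C)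
    (M : ℕ) : ∑ k ∈ range M, ∑ e ∈ k.divisorsAntidiagonal, g e.1 e.2 ≤ C := by
  calc ∑ k ∈ range M, ∑ e ∈ k.divisorsAntidiagonal, g e.1 e.2
      = ∑ s ∈ (range M).sigma fun k => k.divisorsAntidiagonal, g s.2.1 s.2.2 := by
        rw [Finset.sum_sigma]
    _ = ∑ e ∈ ((range M).sigma fun k => k.divisorsAntidiagonal).image Sigma.snd, g e.1 e.2 := by
        rw [Finset.sum_image]
        rintro ⟨k, e⟩ h ⟨k', e'⟩ h' rfl
        simp only [Finset.coe_sigma, Set.mem_sigma_iff, Finset.mem_coe,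
          Nat.mem_divisorsAntidiagonal] at h h'
        rw [← h.2.1, ← h'.2.1]
    _ ≤ ∑ e ∈ Icc 1 M ×ˢ Icc 1 M, g e.1 e.2 := by
        refine Finset.sum_le_sum_of_subset_of_nonneg ?_ fun e _ _ => hg _ _
        intro e he
        simp only [Finset.mem_image, Finset.mem_sigma, Finset.mem_range,
          Nat.mem_divisorsAntidiagonal] at he
        obtain ⟨⟨k, e'⟩, ⟨hk, he', h0⟩, rfl⟩ := he
        simp only at *
        have h₁ : e'.1 ≠ 0 := fun h => h0 (by rw [← he', h, zero_mul])
        have h₂ : e'.2 ≠ 0 := fun h => h0 (by rw [← he', h, mul_zero])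
        have h₃ : e'.1 ≤ k := he' ▸ Nat.le_mul_of_pos_right _ (by lia)
        have h₄ : e'.2 ≤ k := he' ▸ Nat.le_mul_of_pos_left _ (by lia)
        simp only [Finset.mem_product, mem_Icc]
        lia
    _ = ∑ m ∈ Icc 1 M, ∑ d ∈ Icc 1 M, g m d := Finset.sum_product _ _ _
    _ ≤ ∑ m ∈ Icc 1 M, B m := Finset.sum_le_sum fun m hm => hB m M (mem_Icc.1 hm).1
    _ ≤ C := hC M

theorem sum_Icc_mul_pow_le {y : ℝ} (hy : 0 ≤ y) (hy1 : y < 1) (M : ℕ) :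
    ∑ d ∈ Icc 1 M, (d : ℝ) * y ^ d ≤ y / (1 - y) ^ 2 := by
  have hy' : ‖y‖ < 1 := by rwa [Real.norm_of_nonneg hy]
  rw [← tsum_coe_mul_geometric_of_norm_lt_one hy']
  exact (hasSum_coe_mul_geometric_of_norm_lt_one hy').summable.sum_le_tsum _
    fun d _ => by positivity

theorem sum_Icc_pow_le {y : ℝ} (hy : 0 ≤ y) (hy1 : y < 1) (M : ℕ) :
    ∑ d ∈ Icc 1 M, y ^ d ≤ y / (1 - y) := by
  have h := geom_sum_Ico_le_of_lt_one (m := 1) (n := M + 1) hy hy1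
  rwa [pow_one] at h

theorem sum_Icc_cube_sub_mul_pow_le {y : ℝ} (hy : 0 ≤ y) (hy1 : y < 1) (M : ℕ) :
    ∑ d ∈ Icc 1 M, ((d : ℝ) ^ 3 - d) * y ^ d ≤ 6 * y ^ 2 / (1 - y) ^ 4 := by
  have hy' : ‖y‖ < 1 := by rwa [Real.norm_of_nonneg hy]
  have h := (hasSum_choose_mul_geometric_of_norm_lt_one 3 hy').mul_left (6 * y ^ 2)
  have hterm : ∀ n : ℕ, 6 * y ^ 2 * (((n + 3).choose 3 : ℕ) * y ^ n) =
      (((n + 2 : ℕ) : ℝ) ^ 3 - (n + 2 : ℕ)) * y ^ (n + 2) := by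
    intro n
    have h₁ : (6 : ℝ) * ((n + 3).choose 3 : ℕ) = (n + 1) * (n + 2) * (n + 3) := by
      have h₂ := Nat.ascFactorial_eq_factorial_mul_choose n 3
      simp only [Nat.ascFactorial, Nat.factorial] at h₂
      have h₃ := congrArg (fun t : ℕ => (t : ℝ)) h₂
      push_cast at h₃
      linarith
    rw [pow_add]
    push_cast
    linear_combination y ^ 2 * y ^ n * h₁
  simp only [hterm] at h
  have h₄ : ∑ d ∈ Icc 1 M, ((d : ℝ) ^ 3 - d) * y ^ d ≤
      ∑ n ∈ range M, (((n + 2 : ℕ) : ℝ) ^ 3 - (n + 2 : ℕ)) * y ^ (n + 2) := by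
    have h₅ : ∀ d ∈ range (M + 2), 0 ≤ ((d : ℝ) ^ 3 - d) * y ^ d := fun d _ => by
      have : (d : ℝ) ≤ (d : ℝ) ^ 3 := by exact_mod_cast Nat.le_self_pow (by lia) d
      exact mul_nonneg (by linarith) (by positivity)
    have h₆ := Finset.sum_le_sum_of_subset_of_nonneg (f := fun d : ℕ => ((d : ℝ) ^ 3 - d) * y ^ d)
      (s := Icc 1 M) (t := range (M + 2)) (fun d hd => by
        have := mem_Icc.1 hd
        exact Finset.mem_range.2 (by lia)) fun d hd _ => h₅ d hd
    refine h₆.trans (le_of_eq ?_)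
    rw [Finset.sum_range_succ', Finset.sum_range_succ']
    simp [add_assoc, one_add_one_eq_two]
  refine h₄.trans ((sum_le_hasSum _ (fun n _ => ?_) h).trans (le_of_eq (by ring)))
  have : ((n + 2 : ℕ) : ℝ) ≤ ((n + 2 : ℕ) : ℝ) ^ 3 := by exact_mod_cast Nat.le_self_pow (by lia) _
  exact mul_nonneg (by linarith) (by positivity)

theorem sigma_eq_sum_snd (k : ℕ) : (σ 1 k : ℝ) = ∑ e ∈ k.divisorsAntidiagonal, (e.2 : ℝ) := by
  rw [ArithmeticFunction.sigma_one_apply]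
  push_cast
  exact (Nat.sum_divisorsAntidiagonal' fun _ d => (d : ℝ)).symm

theorem sigma_eq_sum_fst (k : ℕ) : (σ 1 k : ℝ) = ∑ e ∈ k.divisorsAntidiagonal, (e.1 : ℝ) := by
  rw [ArithmeticFunction.sigma_one_apply]
  push_cast
  exact (Nat.sum_divisorsAntidiagonal fun d _ => (d : ℝ)).symm

theorem pow_div_one_sub_pow_sq_le (hx : 0 ≤ x) (hx1 : x < 1) {m : ℕ} (hm : 1 ≤ m) :
    x ^ m / (1 - x ^ m) ^ 2 ≤ x / (1 - x) ^ 2 * (1 / (m : ℝ) ^ 2) := by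
  have h₁ := sq_mul_pow_le_one_sub_pow_sq hx hx1 hm
  have h₂ : x ^ m < 1 := pow_lt_one₀ hx hx1 (by lia)
  have hm' : (0 : ℝ) < m := by exact_mod_cast hm
  have h₃ : 0 < 1 - x := by linarith
  have h₄ : 0 < 1 - x ^ m := by linarith
  rw [div_mul_div_comm, mul_one, div_le_div_iff₀ (by positivity) (by positivity)]
  calc x ^ m * ((1 - x) ^ 2 * (m : ℝ) ^ 2) = x * ((m : ℝ) ^ 2 * x ^ (m - 1) * (1 - x) ^ 2) := by
        conv_lhs => rw [← Nat.sub_add_cancel hm, pow_succ]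
        rw [Nat.sub_add_cancel hm]
        ring
    _ ≤ x * (1 - x ^ m) ^ 2 := by gcongr

theorem sum_mul_one_div_sq_le {c : ℝ} (hc : 0 ≤ c) (M : ℕ) :
    ∑ m ∈ Icc 1 M, c * (1 / (m : ℝ) ^ 2) ≤ c * 1.65 := by
  rw [← Finset.mul_sum]
  exact mul_le_mul_of_nonneg_left (sum_one_div_sq_le M) hc

theorem tsum_sigma_le (hx : 0 ≤ x) (hx1 : x < 1) :
    ∑' k : ℕ, (σ 1 k : ℝ) * x ^ k ≤ x / (1 - x) ^ 2 * 1.65 := by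
  refine Real.tsum_le_of_sum_range_le (fun k => by positivity) fun M => ?_
  have h := sum_divisorsAntidiagonal_le (g := fun m d => (d : ℝ) * (x ^ m) ^ d)
    (fun m d => by positivity)
    (fun m M hm => (sum_Icc_mul_pow_le (by positivity) (pow_lt_one₀ hx hx1 (by lia)) M).trans
      (pow_div_one_sub_pow_sq_le hx hx1 hm))
    (fun M => sum_mul_one_div_sq_le (by positivity) M) M
  refine le_trans (le_of_eq (Finset.sum_congr rfl fun k _ => ?_)) h
  rw [sigma_eq_sum_snd, Finset.sum_mul]
  refine Finset.sum_congr rfl fun e he => ?_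
  rw [← pow_mul, (Nat.mem_divisorsAntidiagonal.1 he).1]

theorem logGen_le (hx : 0 ≤ x) (hx1 : x < 1) : logGen x ≤ 1 / (1 - x) * 1.65 := by
  have ha : 0 < 1 - x := by linarith
  refine Real.tsum_le_of_sum_range_le (fun k => by positivity) fun M => ?_
  have h := sum_divisorsAntidiagonal_le (g := fun m d => 1 / (m : ℝ) * (x ^ m) ^ d)
    (B := fun m => 1 / (1 - x) * (1 / (m : ℝ) ^ 2)) (fun m d => by positivity)
    (fun m M hm => by
      have h₁ : x ^ m < 1 := pow_lt_one₀ hx hx1 (by lia)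
      have h₂ : 0 < 1 - x ^ m := by linarith
      have hm' : (0 : ℝ) < m := by exact_mod_cast hm
      have h₃ := sum_Icc_pow_le (by positivity) h₁ M
      have h₄ : x ^ m / (1 - x ^ m) ≤ 1 / (1 - x) * (1 / m) := by
        rw [div_mul_div_comm, mul_one, div_le_div_iff₀ h₂ (by positivity)]
        linarith [mul_pow_le_one_sub_pow hx hx1 m]
      rw [← Finset.mul_sum]
      calc 1 / (m : ℝ) * ∑ d ∈ Icc 1 M, (x ^ m) ^ d ≤ 1 / m * (1 / (1 - x) * (1 / m)) := by
            gcongr; exact h₃.trans h₄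
        _ = _ := by ring)
    (fun M => sum_mul_one_div_sq_le (by positivity) M) M
  refine le_trans (le_of_eq (Finset.sum_congr rfl fun k _ => ?_)) h
  rw [sigma_eq_sum_snd, Finset.sum_div, Finset.sum_mul]
  refine Finset.sum_congr rfl fun e he => ?_
  obtain ⟨he, h0⟩ := Nat.mem_divisorsAntidiagonal.1 he
  have h₁ : (e.1 : ℝ) ≠ 0 := by
    rw [Nat.cast_ne_zero]; rintro h; exact h0 (by rw [← he, h, zero_mul])
  have h₂ : (e.2 : ℝ) ≠ 0 := by
    rw [Nat.cast_ne_zero]; rintro h; exact h0 (by rw [← he, h, mul_zero])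
  rw [← pow_mul, he, ← he]
  push_cast
  field_simp

theorem tsum_sq_mul_sigma_le (hx : 0 ≤ x) (hx1 : x < 1) :
    ∑' k : ℕ, (k : ℝ) ^ 2 * σ 1 k * x ^ k ≤
      6 * x ^ 2 / (1 - x) ^ 4 * 1.65 + ∑' k : ℕ, (k : ℝ) * σ 1 k * x ^ k := by
  have hV : Summable fun k : ℕ => (k : ℝ) * σ 1 k * x ^ k := by
    simpa using summable_pow_mul_sigma 1 hx hx1
  have ha : 0 < 1 - x := by linarith
  refine Real.tsum_le_of_sum_range_le (fun k => by positivity) fun M => ?_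
  have hcube : ∀ d : ℕ, 0 ≤ (d : ℝ) ^ 3 - d := fun d => by
    have : (d : ℝ) ≤ (d : ℝ) ^ 3 := by exact_mod_cast Nat.le_self_pow (by lia) d
    linarith
  have h := sum_divisorsAntidiagonal_le
    (g := fun m d => (m : ℝ) ^ 2 * (((d : ℝ) ^ 3 - d) * (x ^ m) ^ d))
    (B := fun m => 6 * x ^ 2 / (1 - x) ^ 4 * (1 / (m : ℝ) ^ 2))
    (fun m d => by have := hcube d; positivity)
    (fun m M hm => by
      have hm' : (0 : ℝ) < m := by exact_mod_cast hm
      have h₁ : x ^ m < 1 := pow_lt_one₀ hx hx1 (by lia)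
      have h₂ := sum_Icc_cube_sub_mul_pow_le (by positivity) h₁ M
      have h₃ := pow_div_one_sub_pow_sq_le hx hx1 hm
      rw [← Finset.mul_sum]
      calc (m : ℝ) ^ 2 * ∑ d ∈ Icc 1 M, ((d : ℝ) ^ 3 - d) * (x ^ m) ^ d
          ≤ (m : ℝ) ^ 2 * (6 * (x ^ m) ^ 2 / (1 - x ^ m) ^ 4) := by gcongr
        _ = 6 * (m : ℝ) ^ 2 * (x ^ m / (1 - x ^ m) ^ 2) ^ 2 := by
          rw [div_pow, ← pow_mul (1 - x ^ m)]; ring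
        _ ≤ 6 * (m : ℝ) ^ 2 * (x / (1 - x) ^ 2 * (1 / (m : ℝ) ^ 2)) ^ 2 := by gcongr
        _ = _ := by field_simp)
    (fun M => sum_mul_one_div_sq_le (by positivity) M) M
  have hsplit : ∀ k : ℕ, (k : ℝ) ^ 2 * σ 1 k * x ^ k = ∑ e ∈ k.divisorsAntidiagonal,
      (e.1 : ℝ) ^ 2 * (((e.2 : ℝ) ^ 3 - e.2) * (x ^ e.1) ^ e.2) + (k : ℝ) * σ 1 k * x ^ k := by
    intro k
    conv_lhs => rw [sigma_eq_sum_snd]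
    rw [sigma_eq_sum_fst, Finset.mul_sum, Finset.sum_mul, Finset.mul_sum, Finset.sum_mul,
      ← Finset.sum_add_distrib]
    refine Finset.sum_congr rfl fun e he => ?_
    rw [← pow_mul, ← (Nat.mem_divisorsAntidiagonal.1 he).1]
    push_cast
    ring
  simp only [hsplit, Finset.sum_add_distrib]
  exact add_le_add h (hV.sum_le_tsum _ fun k _ => by positivity)

theorem two_mul_tsum_mul_sigma_le (hx : 0 ≤ x) (hx1 : x < 1) {t : ℝ} (ht : 0 < t) :
    2 * ∑' k : ℕ, (k : ℝ) * σ 1 k * x ^ k ≤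
      t * ∑' k : ℕ, (k : ℝ) ^ 2 * σ 1 k * x ^ k + t⁻¹ * ∑' k : ℕ, (σ 1 k : ℝ) * x ^ k := by
  have hV : Summable fun k : ℕ => (k : ℝ) * σ 1 k * x ^ k := by
    simpa using summable_pow_mul_sigma 1 hx hx1
  have hK := summable_pow_mul_sigma 2 hx hx1
  have hμ := summable_sigma hx hx1
  rw [← tsum_mul_left, ← tsum_mul_left, ← tsum_mul_left,
    ← (hK.mul_left t).tsum_add (hμ.mul_left t⁻¹)]
  refine (hV.mul_left 2).tsum_le_tsum (fun k => ?_) ((hK.mul_left t).add (hμ.mul_left t⁻¹))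
  have h₁ : 2 * (k : ℝ) ≤ t * (k : ℝ) ^ 2 + t⁻¹ := by
    have h₂ : 0 ≤ t * ((k : ℝ) - t⁻¹) ^ 2 := by positivity
    have h₃ : t * ((k : ℝ) - t⁻¹) ^ 2 = t * (k : ℝ) ^ 2 + t⁻¹ - 2 * k := by field_simp; ring
    linarith
  calc 2 * ((k : ℝ) * σ 1 k * x ^ k) = 2 * (k : ℝ) * (σ 1 k * x ^ k) := by ring
    _ ≤ (t * (k : ℝ) ^ 2 + t⁻¹) * (σ 1 k * x ^ k) := by gcongr
    _ = _ := by ring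

theorem tsum_mul_sigma_le {a : ℝ} (ha : 0 < a) (ha1 : a < 1) :
    ∑' k : ℕ, (k : ℝ) * σ 1 k * (1 - a) ^ k ≤ 4.06 / a ^ 3 := by
  have h₁ := tsum_sigma_le (x := 1 - a) (by linarith) (by linarith)
  have h₂ := tsum_sq_mul_sigma_le (x := 1 - a) (by linarith) (by linarith)
  have h₃ := two_mul_tsum_mul_sigma_le (x := 1 - a) (by linarith) (by linarith)
    (t := 0.4 * a) (by positivity)
  set μ := ∑' k : ℕ, (σ 1 k : ℝ) * (1 - a) ^ k
  set V := ∑' k : ℕ, (k : ℝ) * σ 1 k * (1 - a) ^ k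
  set K := ∑' k : ℕ, (k : ℝ) ^ 2 * σ 1 k * (1 - a) ^ k
  rw [sub_sub_cancel] at h₁ h₂
  have h₁' : (0.4 * a)⁻¹ * μ ≤ 4.125 * (1 - a) / a ^ 3 := by
    calc (0.4 * a)⁻¹ * μ ≤ (0.4 * a)⁻¹ * ((1 - a) / a ^ 2 * 1.65) := by gcongr
      _ = _ := by field_simp; ring
  have h₂' : 0.4 * a * K ≤ 3.96 * (1 - a) ^ 2 / a ^ 3 + 0.4 * a * V := by
    calc 0.4 * a * K ≤ 0.4 * a * (6 * (1 - a) ^ 2 / a ^ 4 * 1.65 + V) := by gcongr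
      _ = _ := by field_simp; ring
  have h₄ : V * (2 - 0.4 * a) ≤ (8.12 * (1 - 0.2 * a)) / a ^ 3 := by
    calc V * (2 - 0.4 * a) ≤ (4.125 * (1 - a) + 3.96 * (1 - a) ^ 2) / a ^ 3 := by
          rw [add_div]; linarith
      _ ≤ _ := by gcongr; nlinarith
  have h₅ : (2 - 0.4 * a) * V ≤ (2 - 0.4 * a) * (4.06 / a ^ 3) := by
    calc (2 - 0.4 * a) * V = V * (2 - 0.4 * a) := mul_comm _ _
      _ ≤ _ := h₄
      _ = _ := by ring
  exact le_of_mul_le_mul_left h₅ (by linarith)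

theorem tsum_sq_mul_sigma_le_of_sub {a : ℝ} (ha : 0 < a) (ha1 : a < 1) :
    ∑' k : ℕ, (k : ℝ) ^ 2 * σ 1 k * (1 - a) ^ k ≤ 10 / a ^ 4 := by
  have h₁ := tsum_mul_sigma_le ha ha1
  have h₂ := tsum_sq_mul_sigma_le (x := 1 - a) (by linarith) (by linarith)
  rw [sub_sub_cancel] at h₂
  calc _ ≤ 6 * (1 - a) ^ 2 / a ^ 4 * 1.65 + 4.06 / a ^ 3 := by linarith
    _ = (9.9 * (1 - a) ^ 2 + 4.06 * a) / a ^ 4 := by field_simp; ring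
    _ ≤ 10 / a ^ 4 := by gcongr; nlinarith

/-! ### Bounds for the decay and the phase -/

theorem natCast_le_sigma (k : ℕ) : k ≤ σ 1 k := by
  rcases eq_or_ne k 0 with rfl | hk
  · simp
  · rw [ArithmeticFunction.sigma_one_apply]
    exact Finset.single_le_sum (f := fun d => d) (fun _ _ => Nat.zero_le _)
      (Nat.mem_divisors_self k hk)

theorem decay_nonneg (hx : 0 ≤ x) (θ : ℝ) : 0 ≤ decay x θ :=
  tsum_nonneg fun k => mul_nonneg (by positivity) (by linarith [cos_le_one (k * θ)])

theorem hasSum_pow_mul_one_sub_cos (hx : 0 ≤ x) (hx1 : x < 1) (θ : ℝ) :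
    HasSum (fun k : ℕ => x ^ k * (1 - cos (k * θ)))
      (x * (1 + x) * (1 - cos θ) / ((1 - x) * ((1 - x) ^ 2 + 2 * x * (1 - cos θ)))) := by
  have hz : ‖(x : ℂ) * Complex.exp (θ * Complex.I)‖ < 1 := by rwa [norm_ofReal_mul_exp hx]
  have h₁ := Complex.hasSum_re (hasSum_geometric_of_norm_lt_one hz)
  have h₂ : ∀ k : ℕ, (((x : ℂ) * Complex.exp (θ * Complex.I)) ^ k).re = x ^ k * cos (k * θ) := by
    intro k
    have h := congrArg Complex.re (ofReal_mul_exp_pow 1 x θ k)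
    rwa [Complex.add_re, Complex.re_ofReal_mul, Complex.re_ofReal_mul, Complex.I_re, mul_zero,
      add_zero, Complex.ofReal_re, one_mul, one_mul] at h
  have h₃ : ((1 - (x : ℂ) * Complex.exp (θ * Complex.I))⁻¹).re =
      (1 - x * cos θ) / ((1 - x) ^ 2 + 2 * x * (1 - cos θ)) := by
    rw [Complex.inv_re, Complex.normSq_apply]
    have h₄ : ((x : ℂ) * Complex.exp (θ * Complex.I)).re = x * cos θ := by
      rw [Complex.re_ofReal_mul, Complex.exp_ofReal_mul_I_re]
    have h₅ : ((x : ℂ) * Complex.exp (θ * Complex.I)).im = x * sin θ := by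
      rw [Complex.im_ofReal_mul, Complex.exp_ofReal_mul_I_im]
    rw [Complex.sub_re, Complex.sub_im, h₄, h₅, Complex.one_re, Complex.one_im]
    congr 1
    linear_combination x ^ 2 * sin_sq_add_cos_sq θ
  simp only [h₂, h₃] at h₁
  have ha : 0 < 1 - x := by linarith
  have hu : 0 ≤ 1 - cos θ := by linarith [cos_le_one θ]
  have hD : 0 < (1 - x) ^ 2 + 2 * x * (1 - cos θ) := by positivity
  have h₆ := (hasSum_geometric_of_lt_one hx hx1).sub h₁
  have h₇ : (1 - x)⁻¹ - (1 - x * cos θ) / ((1 - x) ^ 2 + 2 * x * (1 - cos θ)) =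
      x * (1 + x) * (1 - cos θ) / ((1 - x) * ((1 - x) ^ 2 + 2 * x * (1 - cos θ))) := by
    rw [inv_eq_one_div, div_sub_div _ _ ha.ne' hD.ne']
    congr 1
    ring
  rw [h₇] at h₆
  refine h₆.congr_fun fun k => ?_
  ring

theorem le_decay (hx : 0 ≤ x) (hx1 : x < 1) (θ : ℝ) :
    x * (1 + x) * (1 - cos θ) / ((1 - x) * ((1 - x) ^ 2 + 2 * x * (1 - cos θ))) ≤ decay x θ := by
  refine hasSum_le (fun k => ?_) (hasSum_pow_mul_one_sub_cos hx hx1 θ)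
    (summable_decay hx hx1 θ).hasSum
  rcases Nat.eq_zero_or_pos k with rfl | hk
  · simp
  · have hk' : (0 : ℝ) < k := by exact_mod_cast hk
    have h₁ : 1 ≤ (σ 1 k : ℝ) / k := by
      rw [one_le_div hk']; exact_mod_cast natCast_le_sigma k
    have h₂ : 0 ≤ x ^ k * (1 - cos (k * θ)) :=
      mul_nonneg (by positivity) (by linarith [cos_le_one (k * θ)])
    rw [mul_assoc]
    exact le_mul_of_one_le_left h₂ h₁

theorem decay_le {a θ : ℝ} (ha : 0 < a) (ha1 : a < 1) :
    decay (1 - a) θ ≤ 2.03 / a ^ 3 * θ ^ 2 := by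
  have hx : 0 ≤ 1 - a := by linarith
  have hx1 : 1 - a < 1 := by linarith
  have hV : Summable fun k : ℕ => (k : ℝ) * σ 1 k * (1 - a) ^ k := by
    simpa using summable_pow_mul_sigma 1 hx hx1
  calc decay (1 - a) θ ≤ ∑' k : ℕ, (k : ℝ) * σ 1 k * (1 - a) ^ k * (θ ^ 2 / 2) := by
        refine (summable_decay hx hx1 θ).tsum_le_tsum (fun k => ?_) (hV.mul_right _)
        rcases Nat.eq_zero_or_pos k with rfl | hk
        · simp
        have hk' : (k : ℝ) ≠ 0 := by positivity
        calc (σ 1 k : ℝ) / k * (1 - a) ^ k * (1 - cos (k * θ))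
            ≤ (σ 1 k : ℝ) / k * (1 - a) ^ k * ((k * θ) ^ 2 / 2) := by
              gcongr
              linarith [one_sub_sq_div_two_le_cos (x := k * θ)]
          _ = _ := by field_simp
    _ ≤ 4.06 / a ^ 3 * (θ ^ 2 / 2) := by
        rw [tsum_mul_right]
        gcongr
        exact tsum_mul_sigma_le ha ha1
    _ = _ := by ring

theorem abs_sin_sub_self_le {t : ℝ} (ht : 0 ≤ t) : |sin t - t| ≤ t ^ 3 / 6 := by
  rw [abs_le]
  constructor
  · linarith [sin_ge_sub_cube ht]
  · have := sin_le ht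
    have : 0 ≤ t ^ 3 := by positivity
    linarith

theorem abs_phase_sub_le {a θ : ℝ} (ha : 0 < a) (ha1 : a < 1) (hθ : 0 ≤ θ) :
    |phase (1 - a) θ - (∑' k : ℕ, (σ 1 k : ℝ) * (1 - a) ^ k) * θ| ≤ 5 / 3 / a ^ 4 * θ ^ 3 := by
  have hx : 0 ≤ 1 - a := by linarith
  have hx1 : 1 - a < 1 := by linarith
  have hK := summable_pow_mul_sigma 2 hx hx1
  have h₁ := (summable_phase hx hx1 θ).hasSum.sub ((summable_sigma hx hx1).hasSum.mul_right θ)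
  have h₂ : ∀ k : ℕ, ‖(σ 1 k : ℝ) / k * (1 - a) ^ k * sin (k * θ) - σ 1 k * (1 - a) ^ k * θ‖ ≤
      (k : ℝ) ^ 2 * σ 1 k * (1 - a) ^ k * (θ ^ 3 / 6) := by
    intro k
    rcases Nat.eq_zero_or_pos k with rfl | hk
    · simp
    have hk' : (k : ℝ) ≠ 0 := by positivity
    calc ‖(σ 1 k : ℝ) / k * (1 - a) ^ k * sin (k * θ) - σ 1 k * (1 - a) ^ k * θ‖
        = ‖(σ 1 k : ℝ) / k * (1 - a) ^ k * (sin (k * θ) - k * θ)‖ := by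
          congr 1; field_simp
      _ = (σ 1 k : ℝ) / k * (1 - a) ^ k * |sin (k * θ) - k * θ| := by
          rw [norm_mul, Real.norm_of_nonneg (by positivity), Real.norm_eq_abs]
      _ ≤ (σ 1 k : ℝ) / k * (1 - a) ^ k * ((k * θ) ^ 3 / 6) := by
          gcongr
          exact abs_sin_sub_self_le (by positivity)
      _ = _ := by field_simp
  have h₃ := tsum_of_norm_bounded (hK.hasSum.mul_right (θ ^ 3 / 6)) h₂
  rw [h₁.tsum_eq, Real.norm_eq_abs] at h₃
  refine h₃.trans ?_
  calc _ ≤ 10 / a ^ 4 * (θ ^ 3 / 6) := by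
        gcongr
        exact tsum_sq_mul_sigma_le_of_sub ha ha1
    _ = _ := by ring

theorem mul_sq_le_of_le_mul {a c η θ : ℝ} (ha : 0 < a) (ha' : a ≤ 1 / 50) (hη : η ≤ 2)
    (hc0 : 0 ≤ c) (hc : c * (1 + η ^ 2) ≤ 0.97) (hθ0 : 0 ≤ θ) (hθ : θ ≤ η * a) :
    c / a ^ 3 * θ ^ 2 ≤ (1 - a) * (1 + (1 - a)) * (1 - cos θ) /
      ((1 - (1 - a)) * ((1 - (1 - a)) ^ 2 + 2 * (1 - a) * (1 - cos θ))) := by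
  have hθ1 : θ ≤ 0.04 := by nlinarith
  have hu : 0 ≤ 1 - cos θ := by linarith [cos_le_one θ]
  have h₁ : 1 - cos θ ≤ θ ^ 2 / 2 := by linarith [one_sub_sq_div_two_le_cos (x := θ)]
  have h₂ : θ ^ 2 / 2 * 0.9998 ≤ 1 - cos θ := by
    have h₃ := (abs_le.1 (cos_bound (x := θ) (by rw [abs_of_nonneg hθ0]; linarith))).2
    rw [abs_of_nonneg hθ0] at h₃
    have h₄ : θ ^ 4 ≤ 0.04 ^ 2 * θ ^ 2 := by
      rw [show θ ^ 4 = θ ^ 2 * θ ^ 2 by ring]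
      gcongr
    nlinarith
  rw [sub_sub_cancel, div_mul_eq_mul_div, div_le_div_iff₀ (by positivity) (by
    have : 0 ≤ 1 - a := by linarith
    positivity)]
  have h₅ : θ ^ 2 ≤ η ^ 2 * a ^ 2 := by rw [← mul_pow]; gcongr
  have h₆ : a ^ 2 + 2 * (1 - a) * (1 - cos θ) ≤ (1 + η ^ 2) * a ^ 2 := by nlinarith
  have h₇ : 0.97 * θ ^ 2 ≤ (1 - a) * (1 + (1 - a)) * (1 - cos θ) := by
    have h₈ : (1.9404 : ℝ) ≤ (1 - a) * (1 + (1 - a)) := by nlinarith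
    nlinarith
  calc c * θ ^ 2 * (a * (a ^ 2 + 2 * (1 - a) * (1 - cos θ)))
      ≤ c * θ ^ 2 * (a * ((1 + η ^ 2) * a ^ 2)) := by gcongr
    _ = c * (1 + η ^ 2) * (θ ^ 2 * a ^ 3) := by ring
    _ ≤ 0.97 * (θ ^ 2 * a ^ 3) := by gcongr
    _ = 0.97 * θ ^ 2 * a ^ 3 := by ring
    _ ≤ _ := by gcongr

theorem exp_neg_decay_le {a c η θ : ℝ} (ha : 0 < a) (ha' : a ≤ 1 / 50) (hη0 : 0 ≤ η) (hη : η ≤ 2)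
    (hc0 : 0 ≤ c) (hc : c * (1 + η ^ 2) ≤ 0.97) (hθ0 : 0 ≤ θ) (hθ : θ ≤ π) :
    exp (-decay (1 - a) θ) ≤ exp (-(c / a ^ 3) * θ ^ 2) + exp (-(c * η ^ 2 / a)) := by
  have hx : 0 ≤ 1 - a := by linarith
  have hd := le_decay hx (by linarith) θ
  rcases le_total θ (η * a) with h | h
  · have h₁ := (mul_sq_le_of_le_mul ha ha' hη hc0 hc hθ0 h).trans hd
    refine le_add_of_le_of_nonneg (exp_le_exp.2 ?_) (exp_pos _).le
    linarith
  · have h₁ := mul_sq_le_of_le_mul ha ha' hη hc0 hc (by positivity) le_rfl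
    have h₂ : cos θ ≤ cos (η * a) := cos_le_cos_of_nonneg_of_le_pi (by positivity) hθ h
    refine le_add_of_nonneg_of_le (exp_pos _).le (exp_le_exp.2 (neg_le_neg ?_))
    refine le_trans (le_of_eq ?_) (h₁.trans (le_trans ?_ hd))
    · field_simp
    · have h₃ : 0 ≤ 1 - cos (η * a) := by linarith [cos_le_one (η * a)]
      have h₄ : 0 ≤ 1 - cos θ := by linarith
      rw [sub_sub_cancel, div_le_div_iff₀ (by positivity) (by positivity)]
      have h₅ : (1 - cos (η * a)) * a ^ 2 ≤ (1 - cos θ) * a ^ 2 := by gcongr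
      have h₆ : 0 ≤ (1 - a) * (1 + (1 - a)) * a := by positivity
      nlinarith [mul_le_mul_of_nonneg_left h₅ h₆]

/-! ### Gaussian integrals -/

theorem integral_mul_exp_neg_mul_sq {b : ℝ} (hb : 0 < b) (A B : ℝ) :
    ∫ θ in A..B, θ * exp (-b * θ ^ 2) = (exp (-b * A ^ 2) - exp (-b * B ^ 2)) / (2 * b) := by
  have h : ∀ θ ∈ Set.uIcc A B,
      HasDerivAt (fun t => -exp (-b * t ^ 2) / (2 * b)) (θ * exp (-b * θ ^ 2)) θ := by
    intro θ _
    have h₁ := (((hasDerivAt_pow 2 θ).const_mul (-b)).exp.neg).div_const (2 * b)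
    refine h₁.congr_deriv ?_
    field_simp
    simp [mul_comm]
  rw [integral_eq_sub_of_hasDerivAt h ((by fun_prop : Continuous _).intervalIntegrable _ _)]
  ring

theorem integral_exp_neg_mul_sq_le {b T B : ℝ} (hb : 0 < b) (hT : 0 < T) (hB : T ≤ B) :
    ∫ θ in T..B, exp (-b * θ ^ 2) ≤ exp (-b * T ^ 2) / (2 * b * T) := by
  calc ∫ θ in T..B, exp (-b * θ ^ 2) ≤ ∫ θ in T..B, T⁻¹ * (θ * exp (-b * θ ^ 2)) := by
        refine integral_mono_on hB ((by fun_prop : Continuous _).intervalIntegrable _ _)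
          ((by fun_prop : Continuous _).intervalIntegrable _ _) fun θ hθ => ?_
        rw [← mul_assoc]
        refine le_mul_of_one_le_left (exp_pos _).le ?_
        rw [inv_mul_eq_div, one_le_div hT]
        exact hθ.1
    _ = T⁻¹ * ((exp (-b * T ^ 2) - exp (-b * B ^ 2)) / (2 * b)) := by
        rw [intervalIntegral.integral_const_mul, integral_mul_exp_neg_mul_sq hb]
    _ ≤ T⁻¹ * (exp (-b * T ^ 2) / (2 * b)) := by
        gcongr
        linarith [exp_pos (-b * B ^ 2)]
    _ = _ := by field_simp

theorem integral_sq_mul_exp_neg_mul_sq_le {b B : ℝ} (hb : 0 < b) (hB : 0 ≤ B) :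
    ∫ θ in (0 : ℝ)..B, θ ^ 2 * exp (-b * θ ^ 2) ≤ √(π / b) / 2 / (2 * b) := by
  have h : ∀ θ ∈ Set.uIcc 0 B, HasDerivAt (fun t => -(t * exp (-b * t ^ 2)) / (2 * b))
      (θ ^ 2 * exp (-b * θ ^ 2) - exp (-b * θ ^ 2) / (2 * b)) θ := by
    intro θ _
    have h₁ := (((hasDerivAt_id θ).mul ((hasDerivAt_pow 2 θ).const_mul (-b)).exp).neg).div_const
      (2 * b)
    refine h₁.congr_deriv ?_
    field_simp
    simp
    ring
  have h₁ := integral_eq_sub_of_hasDerivAt h ((by fun_prop : Continuous _).intervalIntegrable _ _)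
  rw [intervalIntegral.integral_sub ((by fun_prop : Continuous _).intervalIntegrable _ _)
    ((by fun_prop : Continuous _).intervalIntegrable _ _), intervalIntegral.integral_div] at h₁
  have h₂ : ∫ θ in (0 : ℝ)..B, exp (-b * θ ^ 2) ≤ √(π / b) / 2 := by
    rw [← integral_gaussian_Ioi, intervalIntegral.integral_of_le hB]
    exact setIntegral_mono_set (integrable_exp_neg_mul_sq hb).integrableOn
      (Filter.Eventually.of_forall fun θ => (exp_pos _).le)
      (Filter.Eventually.of_forall fun θ hθ => hθ.1)
  have h₃ : (∫ θ in (0 : ℝ)..B, exp (-b * θ ^ 2)) / (2 * b) ≤ √(π / b) / 2 / (2 * b) := by gcongr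
  have h₄ : 0 ≤ B * exp (-b * B ^ 2) / (2 * b) := by positivity
  rw [neg_div, neg_div, zero_mul, zero_div] at h₁
  linarith

theorem exp_neg_le_factorial_div_pow {y : ℝ} (hy : 0 < y) (m : ℕ) :
    exp (-y) ≤ m ! / y ^ m := by
  rw [exp_neg, inv_le_comm₀ (exp_pos _) (by positivity), inv_div]
  exact pow_div_factorial_le_exp y hy.le m

variable {s : ℝ}

theorem pi_mul_exp_neg_le (hs0 : 0 < s) (hs : s ≤ 0.1415) :
    π * exp (-(0.65 * 0.7 ^ 2 / s ^ 2)) ≤ 0.012 * s ^ 3 := by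
  have h₁ := exp_neg_le_factorial_div_pow (y := 0.65 * 0.7 ^ 2 / s ^ 2) (by positivity) 8
  have h₂ : s ^ 13 ≤ 0.1415 ^ 13 := by gcongr
  calc π * exp (-(0.65 * 0.7 ^ 2 / s ^ 2)) ≤ 3.15 * ((8 ! : ℕ) / (0.65 * 0.7 ^ 2 / s ^ 2) ^ 8) := by
        gcongr
        exact pi_lt_d2.le
    _ = 3.15 * ((8 ! : ℕ) / (0.65 * 0.7 ^ 2) ^ 8) * s ^ 13 * s ^ 3 := by
        field_simp
    _ ≤ 3.15 * ((8 ! : ℕ) / (0.65 * 0.7 ^ 2) ^ 8) * 0.1415 ^ 13 * s ^ 3 := by gcongr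
    _ ≤ 0.012 * s ^ 3 := by
        gcongr
        norm_num [Nat.factorial]

theorem two_pi_mul_exp_neg_le (hs0 : 0 < s) (hs : s ≤ 0.1415) :
    2 * π * exp (-(0.39 * 1.2 ^ 2 / s ^ 2)) ≤ 0.6 * s ^ 9 := by
  have h₁ := exp_neg_le_factorial_div_pow (y := 0.39 * 1.2 ^ 2 / s ^ 2) (by positivity) 12
  have h₂ : s ^ 15 ≤ 0.1415 ^ 15 := by gcongr
  calc 2 * π * exp (-(0.39 * 1.2 ^ 2 / s ^ 2))
      ≤ 2 * 3.15 * ((12 ! : ℕ) / (0.39 * 1.2 ^ 2 / s ^ 2) ^ 12) := by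
        gcongr
        exact pi_lt_d2.le
    _ = 2 * 3.15 * ((12 ! : ℕ) / (0.39 * 1.2 ^ 2) ^ 12) * s ^ 15 * s ^ 9 := by
        field_simp
    _ ≤ 2 * 3.15 * ((12 ! : ℕ) / (0.39 * 1.2 ^ 2) ^ 12) * 0.1415 ^ 15 * s ^ 9 := by gcongr
    _ ≤ 0.6 * s ^ 9 := by
        gcongr
        norm_num [Nat.factorial]

theorem le_of_sq_le_one_div (hs : s ^ 2 ≤ 1 / 50) : s ≤ 0.1415 :=
  (le_abs_self s).trans (abs_le_of_sq_le_sq (hs.trans (by norm_num)) (by norm_num))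

/-! ### The coefficient integrals at the saddle point -/

theorem continuous_coeffIntegrand (hx : 0 ≤ x) (hx1 : x < 1) (n : ℕ) :
    Continuous fun θ => exp (-decay x θ) * cos (phase x θ - n * θ) := by
  have := continuous_decay hx hx1
  have := continuous_phase hx hx1
  fun_prop

theorem integral_tail_exp_neg_decay_le (hs0 : 0 < s) (hs : s ^ 2 ≤ 1 / 50) :
    ∫ θ in (1.7 * s ^ 3)..π, exp (-decay (1 - s ^ 2) θ) ≤ 0.082 * s ^ 3 := by
  have hs1 := le_of_sq_le_one_div hs
  have hq : 1.7 * s ^ 3 ≤ π := by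
    have : s ^ 3 ≤ 0.1415 ^ 3 := by gcongr
    have := pi_gt_three
    norm_num at *
    linarith
  have hE := continuous_decay (x := 1 - s ^ 2) (by linarith) (by nlinarith)
  have hexp : exp (-1.8785) ≤ 0.154 := by
    rw [exp_neg, inv_le_comm₀ (exp_pos _) (by norm_num)]
    refine le_trans ?_ (sum_le_exp_of_nonneg (by norm_num) 8)
    norm_num [Finset.sum_range_succ, Nat.factorial]
  calc ∫ θ in (1.7 * s ^ 3)..π, exp (-decay (1 - s ^ 2) θ)
      ≤ ∫ θ in (1.7 * s ^ 3)..π,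
        (exp (-(0.65 / (s ^ 2) ^ 3) * θ ^ 2) + exp (-(0.65 * 0.7 ^ 2 / s ^ 2))) := by
        refine integral_mono_on hq ((by fun_prop : Continuous _).intervalIntegrable _ _)
          ((by fun_prop : Continuous _).intervalIntegrable _ _) fun θ hθ => ?_
        exact exp_neg_decay_le (by positivity) hs (by norm_num) (by norm_num) (by norm_num)
          (by norm_num) (le_trans (by positivity) hθ.1) hθ.2
    _ = (∫ θ in (1.7 * s ^ 3)..π, exp (-(0.65 / (s ^ 2) ^ 3) * θ ^ 2)) +
        (π - 1.7 * s ^ 3) * exp (-(0.65 * 0.7 ^ 2 / s ^ 2)) := by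
        rw [intervalIntegral.integral_add ((by fun_prop : Continuous _).intervalIntegrable _ _)
          ((by fun_prop : Continuous _).intervalIntegrable _ _), intervalIntegral.integral_const,
          smul_eq_mul]
    _ ≤ exp (-(0.65 / (s ^ 2) ^ 3) * (1.7 * s ^ 3) ^ 2) /
          (2 * (0.65 / (s ^ 2) ^ 3) * (1.7 * s ^ 3)) +
        π * exp (-(0.65 * 0.7 ^ 2 / s ^ 2)) := by
        gcongr
        · exact integral_exp_neg_mul_sq_le (by positivity) (by positivity) hq
        · linarith [show 0 ≤ 1.7 * s ^ 3 by positivity]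
    _ ≤ exp (-1.8785) / 2.21 * s ^ 3 + 0.012 * s ^ 3 := by
        refine add_le_add (le_of_eq ?_) (pi_mul_exp_neg_le hs0 hs1)
        · rw [show -(0.65 / (s ^ 2) ^ 3) * (1.7 * s ^ 3) ^ 2 = -1.8785 by field_simp; norm_num]
          field_simp
          norm_num
    _ ≤ 0.154 / 2.21 * s ^ 3 + 0.012 * s ^ 3 := by gcongr
    _ ≤ 0.082 * s ^ 3 := by
        rw [← add_mul]
        gcongr
        norm_num

theorem abs_phase_sub_le_of_le {n : ℕ} (hs0 : 0 < s) (hs : s ^ 2 ≤ 1 / 50)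
    (hn : ∑' k : ℕ, (σ 1 k : ℝ) * (1 - s ^ 2) ^ k = (n : ℝ)) {r θ : ℝ} (hθ0 : 0 ≤ θ)
    (hθ : θ ≤ r * s ^ 3) : |phase (1 - s ^ 2) θ - n * θ| ≤ 5 / 3 * r ^ 3 * 0.1415 := by
  have hr : 0 ≤ r := nonneg_of_mul_nonneg_left (hθ0.trans hθ) (by positivity)
  have h := abs_phase_sub_le (a := s ^ 2) (by positivity) (by linarith) hθ0
  rw [hn] at h
  calc |phase (1 - s ^ 2) θ - n * θ| ≤ 5 / 3 / (s ^ 2) ^ 4 * θ ^ 3 := h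
    _ ≤ 5 / 3 / (s ^ 2) ^ 4 * (r * s ^ 3) ^ 3 := by gcongr
    _ = 5 / 3 * r ^ 3 * s := by field_simp
    _ ≤ _ := by
      gcongr
      exact le_of_sq_le_one_div hs

theorem le_coeffIntegral {n : ℕ} (hs0 : 0 < s) (hs : s ^ 2 ≤ 1 / 50)
    (hn : ∑' k : ℕ, (σ 1 k : ℝ) * (1 - s ^ 2) ^ k = (n : ℝ)) :
    0.38 * s ^ 3 ≤ coeffIntegral (1 - s ^ 2) n := by
  have hs1 := le_of_sq_le_one_div hs
  have hq0 : 0 < s ^ 3 := by positivity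
  have hx : 0 ≤ 1 - s ^ 2 := by linarith
  have hx1 : 1 - s ^ 2 < 1 := by nlinarith
  have hE := continuous_decay hx hx1
  have hf := continuous_coeffIntegrand hx hx1 n
  have hq : 1.7 * s ^ 3 ≤ π := by
    have : s ^ 3 ≤ 0.1415 ^ 3 := by gcongr
    have := pi_gt_three
    norm_num at *
    linarith
  have h₁ : 0.466 * s ^ 3 ≤ ∫ θ in (0 : ℝ)..(0.7 * s ^ 3),
      exp (-decay (1 - s ^ 2) θ) * cos (phase (1 - s ^ 2) θ - n * θ) := by
    calc 0.466 * s ^ 3 ≤ ∫ θ in (0 : ℝ)..(0.7 * s ^ 3),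
          (1 - 2.03 / (s ^ 2) ^ 3 * θ ^ 2) * 0.996 := by
          rw [intervalIntegral.integral_mul_const, intervalIntegral.integral_sub
            ((by fun_prop : Continuous _).intervalIntegrable _ _)
            ((by fun_prop : Continuous _).intervalIntegrable _ _), intervalIntegral.integral_const,
            intervalIntegral.integral_const_mul, integral_pow, smul_eq_mul]
          have h₂ : ((0.7 * s ^ 3 - 0) * 1 - 2.03 / (s ^ 2) ^ 3 * (((0.7 * s ^ 3) ^ (2 + 1) -
              0 ^ (2 + 1)) / ((2 : ℕ) + 1))) * 0.996 = (0.7 - 2.03 * 0.343 / 3) * 0.996 * s ^ 3 := by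
            field_simp
            ring
          rw [h₂]
          gcongr
          norm_num
      _ ≤ _ := by
          refine integral_mono_on (by positivity)
            ((by fun_prop : Continuous _).intervalIntegrable _ _)
            (hf.intervalIntegrable _ _) fun θ hθ => ?_
          have h₂ := decay_le (a := s ^ 2) (θ := θ) (by positivity) (by linarith)
          have h₃ := abs_phase_sub_le_of_le hs0 hs hn hθ.1 hθ.2
          have h₄ : 0.996 ≤ cos (phase (1 - s ^ 2) θ - n * θ) := by
            have h₅ := one_sub_sq_div_two_le_cos (x := phase (1 - s ^ 2) θ - n * θ)
            have h₆ := sq_le_sq' (abs_le.1 h₃).1 (abs_le.1 h₃).2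
            norm_num at h₆ ⊢
            linarith
          have h₇ : 1 - 2.03 / (s ^ 2) ^ 3 * θ ^ 2 ≤ exp (-decay (1 - s ^ 2) θ) := by
            linarith [add_one_le_exp (-decay (1 - s ^ 2) θ)]
          calc (1 - 2.03 / (s ^ 2) ^ 3 * θ ^ 2) * 0.996
              ≤ exp (-decay (1 - s ^ 2) θ) * 0.996 := by gcongr
            _ ≤ _ := by gcongr
  have h₂ : 0 ≤ ∫ θ in (0.7 * s ^ 3)..(1.7 * s ^ 3),
      exp (-decay (1 - s ^ 2) θ) * cos (phase (1 - s ^ 2) θ - n * θ) := by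
    refine integral_nonneg (by gcongr; norm_num) fun θ hθ => ?_
    have h₃ := abs_phase_sub_le_of_le hs0 hs hn (le_trans (by positivity) hθ.1) hθ.2
    have h₄ := pi_gt_three
    have h₅ := abs_le.1 h₃
    norm_num at h₅
    exact mul_nonneg (exp_pos _).le (cos_nonneg_of_neg_pi_div_two_le_of_le (by linarith)
      (by linarith))
  have h₃ : -(0.082 * s ^ 3) ≤ ∫ θ in (1.7 * s ^ 3)..π,
      exp (-decay (1 - s ^ 2) θ) * cos (phase (1 - s ^ 2) θ - n * θ) := by
    refine (neg_le_neg (integral_tail_exp_neg_decay_le hs0 hs)).trans ?_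
    rw [← intervalIntegral.integral_neg]
    refine integral_mono_on hq ((by fun_prop : Continuous _).intervalIntegrable _ _)
      (hf.intervalIntegrable _ _) fun θ _ => ?_
    nlinarith [exp_pos (-decay (1 - s ^ 2) θ), neg_one_le_cos (phase (1 - s ^ 2) θ - n * θ)]
  rw [coeffIntegral, ← integral_add_adjacent_intervals (hf.intervalIntegrable 0 (0.7 * s ^ 3))
    (hf.intervalIntegrable _ _), ← integral_add_adjacent_intervals
    (hf.intervalIntegrable (0.7 * s ^ 3) (1.7 * s ^ 3)) (hf.intervalIntegrable _ _)]
  norm_num at *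
  linarith

theorem integral_exp_neg_decay_mul_le {g : ℝ → ℝ} (hs0 : 0 < s) (hs : s ^ 2 ≤ 1 / 50)
    (hg : Continuous g) (hg0 : ∀ θ ∈ Set.Icc 0 π, 0 ≤ g θ) (hg2 : ∀ θ, g θ ≤ 4) :
    ∫ θ in (0 : ℝ)..π, exp (-decay (1 - s ^ 2) θ) * g θ ≤
      (∫ θ in (0 : ℝ)..π, exp (-(0.39 / (s ^ 2) ^ 3) * θ ^ 2) * g θ) + 1.2 * s ^ 9 := by
  have hs1 := le_of_sq_le_one_div hs
  have hE := continuous_decay (x := 1 - s ^ 2) (by linarith) (by nlinarith)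
  calc ∫ θ in (0 : ℝ)..π, exp (-decay (1 - s ^ 2) θ) * g θ
      ≤ ∫ θ in (0 : ℝ)..π, (exp (-(0.39 / (s ^ 2) ^ 3) * θ ^ 2) * g θ +
          exp (-(0.39 * 1.2 ^ 2 / s ^ 2)) * 4) := by
        refine integral_mono_on pi_pos.le ((by fun_prop : Continuous _).intervalIntegrable _ _)
          ((by fun_prop : Continuous _).intervalIntegrable _ _) fun θ hθ => ?_
        have h := exp_neg_decay_le (η := 1.2) (c := 0.39) (by positivity) hs (by norm_num)
          (by norm_num) (by norm_num) (by norm_num) hθ.1 hθ.2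
        calc exp (-decay (1 - s ^ 2) θ) * g θ
            ≤ (exp (-(0.39 / (s ^ 2) ^ 3) * θ ^ 2) + exp (-(0.39 * 1.2 ^ 2 / s ^ 2))) * g θ :=
              mul_le_mul_of_nonneg_right h (hg0 θ hθ)
          _ = exp (-(0.39 / (s ^ 2) ^ 3) * θ ^ 2) * g θ +
              exp (-(0.39 * 1.2 ^ 2 / s ^ 2)) * g θ := add_mul _ _ _
          _ ≤ _ := by
            gcongr
            exact hg2 θ
    _ = (∫ θ in (0 : ℝ)..π, exp (-(0.39 / (s ^ 2) ^ 3) * θ ^ 2) * g θ) +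
          2 * (2 * π * exp (-(0.39 * 1.2 ^ 2 / s ^ 2))) := by
        rw [intervalIntegral.integral_add ((by fun_prop : Continuous _).intervalIntegrable _ _)
          ((by fun_prop : Continuous _).intervalIntegrable _ _), intervalIntegral.integral_const,
          smul_eq_mul]
        ring
    _ ≤ _ := by
        have := two_pi_mul_exp_neg_le hs0 hs1
        linarith

theorem integral_exp_neg_decay_mul_one_sub_cos_le (hs0 : 0 < s) (hs : s ^ 2 ≤ 1 / 50) :
    ∫ θ in (0 : ℝ)..π, exp (-decay (1 - s ^ 2) θ) * (2 * (1 - cos θ)) ≤ 4 * s ^ 9 := by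
  refine (integral_exp_neg_decay_mul_le hs0 hs (by fun_prop)
    (fun θ _ => by linarith [cos_le_one θ]) (fun θ => by linarith [neg_one_le_cos θ])).trans ?_
  have h : ∫ θ in (0 : ℝ)..π, exp (-(0.39 / (s ^ 2) ^ 3) * θ ^ 2) * (2 * (1 - cos θ)) ≤
      ∫ θ in (0 : ℝ)..π, θ ^ 2 * exp (-(0.39 / (s ^ 2) ^ 3) * θ ^ 2) := by
    refine integral_mono_on pi_pos.le ((by fun_prop : Continuous _).intervalIntegrable _ _)
      ((by fun_prop : Continuous _).intervalIntegrable _ _) fun θ _ => ?_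
    rw [mul_comm (θ ^ 2)]
    gcongr
    linarith [one_sub_sq_div_two_le_cos (x := θ)]
  have h₁ := integral_sq_mul_exp_neg_mul_sq_le (b := 0.39 / (s ^ 2) ^ 3) (by positivity) pi_pos.le
  have h₂ : √(π / (0.39 / (s ^ 2) ^ 3)) ≤ 3 * s ^ 3 := by
    rw [Real.sqrt_le_left (by positivity)]
    calc π / (0.39 / (s ^ 2) ^ 3) ≤ 3.15 / (0.39 / (s ^ 2) ^ 3) := by
          gcongr; exact pi_lt_d2.le
      _ = 3.15 / 0.39 * s ^ 6 := by field_simp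
      _ ≤ 9 * s ^ 6 := by gcongr; norm_num
      _ = _ := by ring
  have h₃ : √(π / (0.39 / (s ^ 2) ^ 3)) / 2 / (2 * (0.39 / (s ^ 2) ^ 3)) ≤ 2 * s ^ 9 := by
    calc √(π / (0.39 / (s ^ 2) ^ 3)) / 2 / (2 * (0.39 / (s ^ 2) ^ 3))
        ≤ 3 * s ^ 3 / 2 / (2 * (0.39 / (s ^ 2) ^ 3)) := by gcongr
      _ = 3 / 4 / 0.39 * s ^ 9 := by field_simp; norm_num
      _ ≤ 2 * s ^ 9 := by gcongr; norm_num
  have h₄ : 0 ≤ s ^ 9 := by positivity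
  linarith

theorem integral_exp_neg_decay_mul_sin_le (hs0 : 0 < s) (hs : s ^ 2 ≤ 1 / 50) :
    ∫ θ in (0 : ℝ)..π, exp (-decay (1 - s ^ 2) θ) * (2 * sin θ) ≤ 2.6 * s ^ 6 := by
  refine (integral_exp_neg_decay_mul_le hs0 hs (by fun_prop)
    (fun θ hθ => by linarith [sin_nonneg_of_mem_Icc hθ])
    (fun θ => by linarith [sin_le_one θ])).trans ?_
  have h : ∫ θ in (0 : ℝ)..π, exp (-(0.39 / (s ^ 2) ^ 3) * θ ^ 2) * (2 * sin θ) ≤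
      ∫ θ in (0 : ℝ)..π, 2 * (θ * exp (-(0.39 / (s ^ 2) ^ 3) * θ ^ 2)) := by
    refine integral_mono_on pi_pos.le ((by fun_prop : Continuous _).intervalIntegrable _ _)
      ((by fun_prop : Continuous _).intervalIntegrable _ _) fun θ hθ => ?_
    rw [← mul_assoc 2, mul_comm (2 * θ)]
    gcongr
    exact sin_le hθ.1
  rw [intervalIntegral.integral_const_mul, integral_mul_exp_neg_mul_sq (by positivity)] at h
  have h₁ : 2 * ((exp (-(0.39 / (s ^ 2) ^ 3) * 0 ^ 2) - exp (-(0.39 / (s ^ 2) ^ 3) * π ^ 2)) /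
      (2 * (0.39 / (s ^ 2) ^ 3))) ≤ 1 / 0.39 * s ^ 6 := by
    calc _ ≤ 2 * (1 / (2 * (0.39 / (s ^ 2) ^ 3))) := by
          gcongr
          have := exp_pos (-(0.39 / (s ^ 2) ^ 3) * π ^ 2)
          rw [zero_pow two_ne_zero, mul_zero, exp_zero]
          linarith
      _ = _ := by field_simp
  have h₂ : s ^ 9 ≤ 0.003 * s ^ 6 := by
    have h₃ : s ^ 3 ≤ 0.1415 ^ 3 := by
      have := le_of_sq_le_one_div hs
      gcongr
    calc s ^ 9 = s ^ 3 * s ^ 6 := by ring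
      _ ≤ 0.1415 ^ 3 * s ^ 6 := by gcongr
      _ ≤ _ := by gcongr; norm_num
  have h₃ : 0 < s ^ 6 := by positivity
  norm_num at *
  linarith

theorem abs_coeffIntegral_add_sub_le {n : ℕ} (hn : 1 ≤ n) (hx : 0 ≤ x) (hx1 : x < 1) :
    |coeffIntegral x (n + 1) + coeffIntegral x (n - 1) - 2 * coeffIntegral x n| ≤
      ∫ θ in (0 : ℝ)..π, exp (-decay x θ) * (2 * (1 - cos θ)) := by
  have hf := fun m => (continuous_coeffIntegrand hx hx1 m).intervalIntegrable (μ := volume) 0 π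
  have hE := continuous_decay hx hx1
  rw [coeffIntegral, coeffIntegral, coeffIntegral, ← intervalIntegral.integral_const_mul,
    ← intervalIntegral.integral_add (hf _) (hf _),
    ← intervalIntegral.integral_sub ((hf _).add (hf _)) ((hf _).const_mul 2), ← Real.norm_eq_abs]
  refine norm_integral_le_of_norm_le pi_pos.le (Filter.Eventually.of_forall fun θ _ => ?_)
    ((by fun_prop : Continuous _).intervalIntegrable _ _)
  have h₁ : exp (-decay x θ) * cos (phase x θ - (n + 1 : ℕ) * θ) +
      exp (-decay x θ) * cos (phase x θ - (n - 1 : ℕ) * θ) -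
      2 * (exp (-decay x θ) * cos (phase x θ - n * θ)) =
      exp (-decay x θ) * (-cos (phase x θ - n * θ) * (2 * (1 - cos θ))) := by
    rw [Nat.cast_sub hn, Nat.cast_add, Nat.cast_one,
      show phase x θ - ((n : ℝ) + 1) * θ = phase x θ - n * θ - θ by ring,
      show phase x θ - ((n : ℝ) - 1) * θ = phase x θ - n * θ + θ by ring, cos_add, cos_sub]
    ring
  rw [h₁, norm_mul, norm_mul, norm_neg, Real.norm_of_nonneg (exp_pos _).le,
    Real.norm_of_nonneg (by linarith [cos_le_one θ] : 0 ≤ 2 * (1 - cos θ))]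
  refine mul_le_mul_of_nonneg_left ?_ (exp_pos _).le
  exact mul_le_of_le_one_left (by linarith [cos_le_one θ]) (abs_cos_le_one _)

theorem abs_coeffIntegral_sub_le {n : ℕ} (hn : 1 ≤ n) (hx : 0 ≤ x) (hx1 : x < 1) :
    |coeffIntegral x (n + 1) - coeffIntegral x (n - 1)| ≤
      ∫ θ in (0 : ℝ)..π, exp (-decay x θ) * (2 * sin θ) := by
  have hf := fun m => (continuous_coeffIntegrand hx hx1 m).intervalIntegrable (μ := volume) 0 π
  have hE := continuous_decay hx hx1
  rw [coeffIntegral, coeffIntegral, ← intervalIntegral.integral_sub (hf _) (hf _),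
    ← Real.norm_eq_abs]
  refine norm_integral_le_of_norm_le pi_pos.le (Filter.Eventually.of_forall fun θ hθ => ?_)
    ((by fun_prop : Continuous _).intervalIntegrable _ _)
  have hsin : 0 ≤ sin θ := sin_nonneg_of_mem_Icc (Set.Ioc_subset_Icc_self hθ)
  have h₁ : exp (-decay x θ) * cos (phase x θ - (n + 1 : ℕ) * θ) -
      exp (-decay x θ) * cos (phase x θ - (n - 1 : ℕ) * θ) =
      exp (-decay x θ) * (sin (phase x θ - n * θ) * (2 * sin θ)) := by
    rw [Nat.cast_sub hn, Nat.cast_add, Nat.cast_one,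
      show phase x θ - ((n : ℝ) + 1) * θ = phase x θ - n * θ - θ by ring,
      show phase x θ - ((n : ℝ) - 1) * θ = phase x θ - n * θ + θ by ring, cos_add, cos_sub]
    ring
  rw [h₁, norm_mul, norm_mul, Real.norm_of_nonneg (exp_pos _).le,
    Real.norm_of_nonneg (by positivity : 0 ≤ 2 * sin θ)]
  refine mul_le_mul_of_nonneg_left ?_ (exp_pos _).le
  exact mul_le_of_le_one_left (by positivity) (abs_sin_le_one _)

theorem exists_tsum_sigma_eq (n : ℕ) :
    ∃ x : ℝ, 0 ≤ x ∧ x < 1 ∧ ∑' k : ℕ, (σ 1 k : ℝ) * x ^ k = (n : ℝ) := by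
  set r : ℝ := n / (n + 1) with hr
  have hr0 : 0 ≤ r := by positivity
  have hr1 : r < 1 := by rw [hr, div_lt_one (by positivity)]; linarith
  have hcont : ContinuousOn (fun x : ℝ => ∑' k : ℕ, (σ 1 k : ℝ) * x ^ k) (Set.Icc 0 r) := by
    refine continuousOn_tsum (fun k => by fun_prop) (summable_sigma hr0 hr1) fun k x hx => ?_
    rw [Real.norm_of_nonneg (by have := hx.1; positivity)]
    have := hx.1
    have := hx.2
    gcongr
  have h₀ : ∑' k : ℕ, (σ 1 k : ℝ) * (0 : ℝ) ^ k ≤ n := by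
    rw [tsum_eq_single 0 fun k hk => by rw [zero_pow hk, mul_zero]]
    simp
  have h₁ : (n : ℝ) ≤ ∑' k : ℕ, (σ 1 k : ℝ) * r ^ k := by
    have h₂ := hasSum_geometric_of_lt_one hr0 hr1
    have h₃ : (1 - r)⁻¹ - 1 = n := by
      rw [hr]
      field_simp
      ring
    have h₄ := h₂.sub (hasSum_ite_eq (0 : ℕ) (1 : ℝ))
    rw [h₃] at h₄
    refine hasSum_le (fun k => ?_) h₄ (summable_sigma hr0 hr1).hasSum
    rcases Nat.eq_zero_or_pos k with rfl | hk
    · simp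
    · rw [if_neg hk.ne', sub_zero]
      refine le_mul_of_one_le_left (by positivity) ?_
      exact_mod_cast hk.trans_le (natCast_le_sigma k)
  obtain ⟨x, hx, hxn⟩ := intermediate_value_Icc hr0 hcont ⟨h₀, h₁⟩
  exact ⟨x, hx.1, hx.2.trans_lt hr1, hxn⟩

theorem exists_saddle_point {n : ℕ} (hn : 4098 ≤ n) :
    ∃ s : ℝ, 0 < s ∧ s ^ 2 ≤ 1 / 50 ∧ (n + 1 : ℝ) * s ^ 4 ≤ 1.65 ∧
      ∑' k : ℕ, (σ 1 k : ℝ) * (1 - s ^ 2) ^ k = (n : ℝ) := by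
  obtain ⟨x, hx, hx1, hxn⟩ := exists_tsum_sigma_eq n
  have hn' : (4098 : ℝ) ≤ n := by exact_mod_cast hn
  have ha : 0 < 1 - x := by linarith
  have hs : √(1 - x) ^ 2 = 1 - x := Real.sq_sqrt ha.le
  have h := tsum_sigma_le hx hx1
  rw [hxn, div_mul_eq_mul_div, le_div_iff₀ (by positivity)] at h
  refine ⟨√(1 - x), Real.sqrt_pos.2 ha, ?_, ?_, ?_⟩
  · rw [hs]
    by_contra! hcon
    nlinarith
  · rw [show √(1 - x) ^ 4 = (√(1 - x) ^ 2) ^ 2 by ring, hs]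
    nlinarith
  · rw [hs, sub_sub_cancel, hxn]

theorem mul_coeffIntegral_sq_lt {s : ℝ} {n : ℕ} (hn : 1 ≤ n) (hs0 : 0 < s) (hs : s ^ 2 ≤ 1 / 50)
    (hsn : (n + 1 : ℝ) * s ^ 4 ≤ 1.65) (h : ∑' k : ℕ, (σ 1 k : ℝ) * (1 - s ^ 2) ^ k = (n : ℝ)) :
    n * coeffIntegral (1 - s ^ 2) n ^ 2 <
      (n + 1) * (coeffIntegral (1 - s ^ 2) (n - 1) * coeffIntegral (1 - s ^ 2) (n + 1)) := by
  have hx : 0 ≤ 1 - s ^ 2 := by linarith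
  have hx1 : 1 - s ^ 2 < 1 := by nlinarith
  have hJ := le_coeffIntegral hs0 hs h
  have hD₂ := (abs_coeffIntegral_add_sub_le hn hx hx1).trans
    (integral_exp_neg_decay_mul_one_sub_cos_le hs0 hs)
  have hD₁ := (abs_coeffIntegral_sub_le hn hx hx1).trans (integral_exp_neg_decay_mul_sin_le hs0 hs)
  set J := coeffIntegral (1 - s ^ 2) n
  set A := coeffIntegral (1 - s ^ 2) (n + 1)
  set B := coeffIntegral (1 - s ^ 2) (n - 1)
  have hq : 0 < s ^ 3 := by positivity
  have hJ0 : 0 < J := by linarith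
  have h6 : s ^ 6 ≤ 1 / 50 ^ 3 := by
    calc s ^ 6 = (s ^ 2) ^ 3 := by ring
      _ ≤ (1 / 50) ^ 3 := by gcongr
      _ = _ := by norm_num
  have h9 : s ^ 9 ≤ 1 / 50 ^ 3 * s ^ 3 := by
    calc s ^ 9 = s ^ 6 * s ^ 3 := by ring
      _ ≤ _ := by gcongr
  have hn6 : (n + 1 : ℝ) * s ^ 6 ≤ 0.033 := by
    calc (n + 1 : ℝ) * s ^ 6 = (n + 1 : ℝ) * s ^ 4 * s ^ 2 := by ring
      _ ≤ 1.65 * (1 / 50) := by gcongr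
      _ = _ := by norm_num
  have hS : 2 * J - 4 * s ^ 9 ≤ A + B := by linarith [(abs_le.1 hD₂).1]
  have hS2 : (2 * J - 4 * s ^ 9) ^ 2 ≤ (A + B) ^ 2 := by
    refine pow_le_pow_left₀ ?_ hS 2
    norm_num at *
    linarith
  have hΔ : (A - B) ^ 2 ≤ (2.6 * s ^ 6) ^ 2 := sq_le_sq' (abs_le.1 hD₁).1 (abs_le.1 hD₁).2
  have h₁ : 4 * J ^ 2 - 16 * J * s ^ 9 - 6.76 * s ^ 12 ≤ 4 * (B * A) := by
    nlinarith [sq_nonneg (4 * s ^ 9)]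
  have h₂ : (n + 1 : ℝ) * s ^ 9 ≤ 0.033 * s ^ 3 := by
    calc (n + 1 : ℝ) * s ^ 9 = (n + 1 : ℝ) * s ^ 6 * s ^ 3 := by ring
      _ ≤ _ := by gcongr
  have h₃ : (n + 1 : ℝ) * s ^ 12 ≤ 0.033 * s ^ 6 := by
    calc (n + 1 : ℝ) * s ^ 12 = (n + 1 : ℝ) * s ^ 6 * s ^ 6 := by ring
      _ ≤ _ := by gcongr
  have h₄ : (n + 1 : ℝ) * (4 * J ^ 2 - 16 * J * s ^ 9 - 6.76 * s ^ 12) ≤ (n + 1) * (4 * (B * A)) :=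
    mul_le_mul_of_nonneg_left h₁ (by positivity)
  have h₅ : J * ((n + 1 : ℝ) * s ^ 9) ≤ J * (0.033 * s ^ 3) := by gcongr
  have h₆ : 0.38 * s ^ 3 * (0.38 * s ^ 3 - 0.132 * s ^ 3) ≤ J * (J - 0.132 * s ^ 3) := by
    have : 0 ≤ 0.38 * s ^ 3 - 0.132 * s ^ 3 := by
      rw [← sub_mul]; exact mul_nonneg (by norm_num) hq.le
    gcongr
  have h₇ : 0 < s ^ 6 := by positivity
  have h₈ : 0.38 * s ^ 3 * (0.38 * s ^ 3 - 0.132 * s ^ 3) = 0.09424 * s ^ 6 := by ring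
  norm_num at *
  nlinarith

theorem mul_p_sq_lt_of_le {n : ℕ} (hn : 4098 ≤ n) :
    n * p n ^ 2 < (n + 1) * (p (n - 1) * p (n + 1)) := by
  obtain ⟨s, hs0, hs, hsn, h⟩ := exists_saddle_point hn
  have hx : 0 < 1 - s ^ 2 := by linarith
  have hx1 : 1 - s ^ 2 < 1 := by nlinarith
  have hlt := mul_coeffIntegral_sq_lt (by lia) hs0 hs hsn h
  have hp := exp_logGen_mul_coeffIntegral hx.le hx1
  set F := exp (logGen (1 - s ^ 2))
  have hF : 0 < F := exp_pos _
  have h₁ := mul_lt_mul_of_pos_left hlt (show 0 < F ^ 2 by positivity)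
  have h₂ : F ^ 2 * (n * coeffIntegral (1 - s ^ 2) n ^ 2) =
      π ^ 2 * ((1 - s ^ 2) ^ n) ^ 2 * (n * p n ^ 2) := by
    rw [show F ^ 2 * (n * coeffIntegral (1 - s ^ 2) n ^ 2) =
      n * (F * coeffIntegral (1 - s ^ 2) n) ^ 2 by ring, hp]
    ring
  have h₃ : F ^ 2 * ((n + 1) *
      (coeffIntegral (1 - s ^ 2) (n - 1) * coeffIntegral (1 - s ^ 2) (n + 1))) =
      π ^ 2 * ((1 - s ^ 2) ^ n) ^ 2 * ((n + 1) * (p (n - 1) * p (n + 1))) := by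
    rw [show F ^ 2 * ((n + 1) *
      (coeffIntegral (1 - s ^ 2) (n - 1) * coeffIntegral (1 - s ^ 2) (n + 1))) = (n + 1) *
      ((F * coeffIntegral (1 - s ^ 2) (n - 1)) * (F * coeffIntegral (1 - s ^ 2) (n + 1))) by ring,
      hp, hp, show ((1 - s ^ 2) ^ n) ^ 2 = (1 - s ^ 2) ^ (n - 1) * (1 - s ^ 2) ^ (n + 1) by
        rw [← pow_mul, ← pow_add]; congr 1; lia]
    ring
  rw [h₂, h₃] at h₁
  exact lt_of_mul_lt_mul_left h₁ (by positivity)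

theorem p_mul_pow_le (hx : 0 ≤ x) (hx1 : x < 1) (n : ℕ) : p n * x ^ n ≤ exp (logGen x) := by
  have h₁ : coeffIntegral x n ≤ π := by
    calc coeffIntegral x n ≤ ∫ _ in (0 : ℝ)..π, (1 : ℝ) := by
          refine integral_mono_on pi_pos.le
            ((continuous_coeffIntegrand hx hx1 n).intervalIntegrable _ _)
            intervalIntegrable_const fun θ _ => ?_
          have h : exp (-decay x θ) ≤ 1 := by
            rw [exp_le_one_iff]
            linarith [decay_nonneg hx θ]
          exact (mul_le_of_le_one_right (exp_pos _).le (cos_le_one _)).trans h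
      _ = π := by simp
  have h₂ := exp_logGen_mul_coeffIntegral hx hx1 n
  have h₃ : exp (logGen x) * coeffIntegral x n ≤ exp (logGen x) * π := by gcongr
  rw [h₂, mul_comm] at h₃
  exact le_of_mul_le_mul_right h₃ pi_pos

theorem p_lt_two_pow {n : ℕ} (hn : n < 4100) : p n < 2 ^ 256 := by
  have h₁ := p_mul_pow_le (x := 0.98) (by norm_num) (by norm_num) n
  have h₂ := logGen_le (x := 0.98) (by norm_num) (by norm_num)
  have h₃ : exp (logGen 0.98) ≤ 2.72 ^ 83 := by
    calc exp (logGen 0.98) ≤ exp ((83 : ℕ) * 1) := by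
          rw [exp_le_exp]
          norm_num at *
          linarith
      _ = exp 1 ^ 83 := exp_nat_mul 1 83
      _ ≤ _ := by
        gcongr
        linarith [exp_one_lt_d9]
  have h₄ : (0.98 : ℝ) ^ 4100 ≤ 0.98 ^ n :=
    pow_le_pow_of_le_one (by norm_num) (by norm_num) hn.le
  have h₅ : (2.72 : ℝ) ^ 83 < 2 ^ 256 * 0.98 ^ 4100 := by
    calc (2.72 : ℝ) ^ 83 < 2 ^ 256 * 0.13 ^ 41 := by norm_num
      _ ≤ 2 ^ 256 * (0.98 ^ 100) ^ 41 := by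
        gcongr
        norm_num
      _ = _ := by rw [← pow_mul]
  have h₆ : p n * 0.98 ^ n < 2 ^ 256 * 0.98 ^ n := by
    calc p n * 0.98 ^ n ≤ 2.72 ^ 83 := h₁.trans h₃
      _ < 2 ^ 256 * 0.98 ^ 4100 := h₅
      _ ≤ _ := by gcongr
  exact lt_of_mul_lt_mul_right h₆ (by positivity)

end PartitionAsymptotics

theorem mul_p_sq_lt {n : ℕ} (hn : 1 < n) : n * p n ^ 2 < (n + 1) * (p (n - 1) * p (n + 1)) := by
  rcases lt_or_ge n 4098 with h | h
  · have hlt := PartitionTable.mul_card_sq_lt (fun m hm => by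
      have := PartitionAsymptotics.p_lt_two_pow hm
      rw [p] at this
      rw [PartitionTable.base]
      exact_mod_cast this) hn h
    rw [p, p, p, ← mul_assoc]
    exact_mod_cast hlt
  · exact PartitionAsymptotics.mul_p_sq_lt_of_le h

end

theorem partition_ratio_ineq (n : ℕ) (hn : 1 < n) :
    p (n - 1) / p n * (1 + 1 / (n : ℝ)) > p n / p (n + 1) := by
  have h := mul_p_sq_lt hn
  have hn' : (0 : ℝ) < n := by exact_mod_cast hn.trans' one_pos
  have h₁ := PartitionAsymptotics.p_pos n
  have h₂ := PartitionAsymptotics.p_pos (n + 1)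
  rw [gt_iff_lt, one_add_div hn'.ne', div_mul_div_comm, div_lt_div_iff₀ h₂ (by positivity)]
  linarith
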